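/- arXiv:2012.15357 — 2 statements merged into one kernel-verified Lean document; each statement's English description precedes it below -/
import Mathlib

section
/- Let q be a prime power, t ≥ 1, and let f(x) = Σ_{j=0}^{k} a_j x^{q^j} ∈ F_{q^n}[x] be an F_q-linearized polynomial of q-degree k < n with a_t = 0 and a_0 ≠ 0. Set d = max{k, t}. If f is r-fat of index t with r > 0, then r > (q^n + 1)/q^{d²} − (2(d−1)·q^{d²}/(q^d − 1))·√(q^n) − 1. -/
/-!
A nonzero `x` lies in the weight space of some `m` of weight greater than one exactly when
`f(ux) = u ^ q ^ t f(x)` for some `u ∉ F_q`. In the coordinates `(x⁻¹, u)` when `t < k`, and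
`(x, u⁻¹)` when `k ≤ t`, this condition is a plane curve `R = 0`, monic of degree at most
`T = q ^ d` in the second coordinate. The scalars `u ∈ F_q` form a component `U = 0` with a point
above every `x`, while one `m` of weight greater than one provides a rational point off that
component, at which the partial derivative of `R` in the second coordinate, a monomial, does not
vanish.

Absolute irreducibility of a component through this point is not needed. Let `M` be a monic
irreducible factor of `R` vanishing there, and `Q = q ^ n`. The Stepanov–Bombieri method yields
`Φ = ∑ bᵢ gᵢ ^ p ^ v` of small weighted degree which vanishes on every separable fibre of `M = 0`
without rational points. The formal branch of the curve at the smooth point shows that `M ∤ Φ`, so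
Bézout bounds the number of such fibres. Hence, as soon as `2 T ^ 3 ≤ √Q`, at least
`Q / T - 2 T ^ 2 √Q + T` values of `x` have a rational point off `U = 0`. Each `m` accounts for at
most `T - 1` of them, since `f(x) - m x ^ q ^ t` has degree at most `T` and vanishes at `0`;
dividing by `T - 1` gives the bound, which is trivial when `√Q < 2 T ^ 3`.
-/

namespace Stepanov

open Polynomial
open scoped PowerSeries

section WeightedDegree

variable (R : Type*) [CommRing R]

/-- Bivariate polynomials of weighted degree at most `m`, where the inner variable has weight `1`
and the outer variable has weight `w`. -/
def weightLE (w m : ℕ) : Submodule R R[X][X] where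
  carrier := {g | ∀ i a, (g.coeff i).coeff a ≠ 0 → a + w * i ≤ m}
  zero_mem' := by simp
  add_mem' {g h} hg hh i a hia := by
    by_cases hga : (g.coeff i).coeff a = 0
    · exact hh i a fun hha => hia (by simp [hga, hha])
    · exact hg i a hga
  smul_mem' c g hg i a hia := hg i a fun hga => hia (by simp [hga])

/-- The substitution `s ↦ s τ`, `y ↦ y τ ^ w`, whose degree in the new outermost variable `τ` is
the weighted degree. -/
noncomputable def weightHom (w : ℕ) : R[X][X] →ₐ[R] R[X][X][X] :=
  aevalAeval (C (C X) * X : R[X][X][X]) (C X * X ^ w)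

variable {R} {w m n : ℕ} {g h : R[X][X]}

lemma weightHom_monomial (i a : ℕ) (c : R) :
    weightHom R w (monomial i (monomial a c)) =
      monomial (a + w * i) (monomial i (monomial a c)) := by
  have hC : weightHom R w (C (C c)) = C (C (C c)) := (weightHom R w).commutes c
  have hX : weightHom R w (C X) = C (C X) * X := by simp [weightHom]
  have hY : weightHom R w X = C X * X ^ w := by simp [weightHom]
  simp only [← C_mul_X_pow_eq_monomial, map_mul, map_pow, hC, hX, hY]
  ring

lemma coeff_weightHom (g : R[X][X]) (e i a : ℕ) :
    (((weightHom R w g).coeff e).coeff i).coeff a =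
      if a + w * i = e then (g.coeff i).coeff a else 0 := by
  induction g using Polynomial.induction_on' with
  | add p q hp hq => simp only [map_add, coeff_add, hp, hq]; split_ifs <;> simp
  | monomial n f =>
    induction f using Polynomial.induction_on' with
    | add p q hp hq => simp only [map_add, coeff_add, hp, hq]; split_ifs <;> simp
    | monomial b c =>
      rw [weightHom_monomial]
      simp only [coeff_monomial]
      grind [coeff_monomial, coeff_zero]

lemma mem_weightLE_iff_natDegree : g ∈ weightLE R w m ↔ (weightHom R w g).natDegree ≤ m := by
  rw [natDegree_le_iff_coeff_eq_zero]
  constructor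
  · intro hg e he
    ext i a
    rw [coeff_weightHom]
    split_ifs with hae
    · by_contra hia
      exact absurd (hg i a hia) (by omega)
    · simp
  · intro hg i a hia
    by_contra hlt
    apply hia
    simpa [hg (a + w * i) (by omega)] using (coeff_weightHom (w := w) g (a + w * i) i a).symm

lemma weightLE_mono (hmn : m ≤ n) : weightLE R w m ≤ weightLE R w n :=
  fun _ hg i a hia => (hg i a hia).trans hmn

lemma mul_mem_weightLE (hg : g ∈ weightLE R w m) (hh : h ∈ weightLE R w n) :
    g * h ∈ weightLE R w (m + n) := by
  rw [mem_weightLE_iff_natDegree] at *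
  rw [map_mul]
  exact natDegree_mul_le.trans (Nat.add_le_add hg hh)

lemma pow_mem_weightLE (hg : g ∈ weightLE R w m) (j : ℕ) : g ^ j ∈ weightLE R w (j * m) := by
  rw [mem_weightLE_iff_natDegree] at *
  rw [map_pow]
  exact natDegree_pow_le.trans (Nat.mul_le_mul_left j hg)

lemma C_mul_X_pow_mem_weightLE {f : R[X]} {i : ℕ} (h : f.natDegree + w * i ≤ m) :
    C f * X ^ i ∈ weightLE R w m := by
  intro j a hja
  rw [coeff_C_mul_X_pow] at hja
  split_ifs at hja with hij
  · exact hij ▸ (Nat.add_le_add_right (le_natDegree_of_ne_zero hja) _).trans h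
  · simp at hja

lemma exists_mem_weightLE (w : ℕ) (g : R[X][X]) : ∃ m, g ∈ weightLE R w m :=
  ⟨_, mem_weightLE_iff_natDegree.2 le_rfl⟩

lemma natDegree_coeff_add_le_of_mem_weightLE (hg : g ∈ weightLE R w m) {i : ℕ}
    (hi : g.coeff i ≠ 0) : (g.coeff i).natDegree + w * i ≤ m :=
  hg i _ (leadingCoeff_ne_zero.2 hi)

lemma weightHom_injective (w : ℕ) : Function.Injective (weightHom R w) := by
  rw [injective_iff_map_eq_zero]
  intro g hg
  ext i a
  simpa [hg] using (coeff_weightHom (w := w) g (a + w * i) i a).symm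

lemma mul_natDegree_le_natDegree_weightHom [Nontrivial R] (hg : g.Monic) (w : ℕ) :
    w * g.natDegree ≤ (weightHom R w g).natDegree := by
  refine le_natDegree_of_ne_zero fun h0 => ?_
  have := coeff_weightHom (w := w) g (w * g.natDegree) g.natDegree 0
  simp [h0, hg] at this

-- The degree of `weightHom` is additive, and on a monic polynomial it is at least `w` times the
-- outer degree; equality for a product forces equality for its factors.
lemma mem_weightLE_of_dvd [IsDomain R] {M f : R[X][X]} (hM : M.Monic) (hf : f.Monic)
    (hfw : f ∈ weightLE R w (w * f.natDegree)) (hMf : M ∣ f) :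
    M ∈ weightLE R w (w * M.natDegree) := by
  obtain ⟨N, rfl⟩ := hMf
  have hN : N.Monic := hM.of_mul_monic_left hf
  have hne {g : R[X][X]} (hg : g.Monic) : weightHom R w g ≠ 0 :=
    (map_ne_zero_iff _ (weightHom_injective w)).2 hg.ne_zero
  have hNdeg := mul_natDegree_le_natDegree_weightHom hN w
  rw [mem_weightLE_iff_natDegree] at *
  rw [map_mul, natDegree_mul (hne hM) (hne hN), hM.natDegree_mul hN, mul_add] at hfw
  omega

lemma mul_leadingCoeff_mul_X_pow_mem_weightLE {M : R[X][X]}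
    (hM : M ∈ weightLE R w (w * M.natDegree)) (hg : g ∈ weightLE R w m) (hg0 : g ≠ 0)
    (hle : M.natDegree ≤ g.natDegree) :
    M * (C g.leadingCoeff * X ^ (g.natDegree - M.natDegree)) ∈ weightLE R w m := by
  have hlead := natDegree_coeff_add_le_of_mem_weightLE hg (leadingCoeff_ne_zero.2 hg0)
  have hsplit : w * g.natDegree = w * M.natDegree + w * (g.natDegree - M.natDegree) := by
    rw [← mul_add, Nat.add_sub_cancel' hle]
  refine weightLE_mono ?_ (mul_mem_weightLE hM (C_mul_X_pow_mem_weightLE le_rfl))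
  rw [leadingCoeff]
  omega

lemma modByMonic_mem_weightLE {M : R[X][X]} (hM : M.Monic)
    (hMw : M ∈ weightLE R w (w * M.natDegree)) (hg : g ∈ weightLE R w m) :
    g %ₘ M ∈ weightLE R w m := by
  induction hd : g.degree using WellFoundedLT.induction generalizing g with
  | ind d ih =>
    nontriviality R
    rcases lt_or_ge g.degree M.degree with hlt | hle
    · rwa [(modByMonic_eq_self_iff hM).2 hlt]
    have hg0 : g ≠ 0 := fun h => hM.ne_zero (by simpa [h] using hle)
    have hstep := mul_leadingCoeff_mul_X_pow_mem_weightLE hMw hg hg0 (natDegree_le_natDegree hle)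
    have hdeg := div_wf_lemma ⟨hle, hg0⟩ hM
    have := ih _ (hd ▸ hdeg) (sub_mem hg hstep) rfl
    rwa [sub_modByMonic, (modByMonic_eq_zero_iff_dvd hM).2 (dvd_mul_right _ _), sub_zero] at this

end WeightedDegree

section Box

variable (K : Type*) [Field K] (D w m : ℕ)

/-- Bivariate polynomials of outer degree less than `D` and weighted degree at most `m`. -/
noncomputable def box : Submodule K K[X][X] :=
  (degreeLT K[X] D).restrictScalars K ⊓ weightLE K w m

variable {K D w m}

lemma mem_box {g : K[X][X]} : g ∈ box K D w m ↔ g.degree < D ∧ g ∈ weightLE K w m := by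
  simp [box, mem_degreeLT]

lemma coeff_mem_degreeLT_of_mem_box {g : K[X][X]} (hg : g ∈ box K D w m) (i : ℕ) :
    g.coeff i ∈ degreeLT K (m + 1 - w * i) := by
  rw [mem_degreeLT, degree_lt_iff_coeff_zero]
  intro a ha
  by_contra hia
  have := (mem_box.1 hg).2 i a hia
  omega

lemma sum_monomial_mem_box (c : ∀ i : Fin D, degreeLT K (m + 1 - w * i)) :
    ∑ i : Fin D, monomial i.1 (c i : K[X]) ∈ box K D w m := by
  refine sum_mem fun i _ => mem_box.2 ⟨?_, ?_⟩
  · exact (degree_monomial_le _ _).trans_lt (by exact_mod_cast i.2)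
  · intro j a hja
    rw [coeff_monomial] at hja
    split_ifs at hja with hij
    · have hlt := (c i).2
      rw [mem_degreeLT, degree_lt_iff_coeff_zero] at hlt
      by_contra hcon
      exact hja (hlt a (by simp only [hij]; omega))
    · simp at hja

/-- A polynomial in a box is determined by its outer coefficients, which are arbitrary polynomials
of bounded degree. -/
noncomputable def boxEquiv (K : Type*) [Field K] (D w m : ℕ) :
    box K D w m ≃ₗ[K] ∀ i : Fin D, degreeLT K (m + 1 - w * i) where
  toFun g i := ⟨g.1.coeff i, coeff_mem_degreeLT_of_mem_box g.2 i⟩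
  map_add' g h := by ext; simp
  map_smul' c g := by ext; simp
  invFun c := ⟨∑ i : Fin D, monomial i.1 (c i : K[X]), sum_monomial_mem_box c⟩
  left_inv g := Subtype.ext <|
    (sum_fin (fun i f => monomial i f) (by simp) (mem_box.1 g.2).1).trans (sum_monomial_eq _)
  right_inv c := by
    ext i : 2
    simp [finsetSum_coeff, coeff_monomial, Fin.val_inj]

instance (n : ℕ) : FiniteDimensional K (degreeLT K n) := (degreeLTEquiv K n).symm.finiteDimensional

instance : FiniteDimensional K (box K D w m) := (boxEquiv K D w m).symm.finiteDimensional

instance : Module.Free K (box K D w m) := Module.Free.of_equiv (boxEquiv K D w m).symm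

lemma finrank_box : Module.finrank K (box K D w m) = ∑ i : Fin D, (m + 1 - w * i) := by
  rw [(boxEquiv K D w m).finrank_eq, Module.finrank_pi_fintype]
  simp [(degreeLTEquiv K _).finrank_eq]

lemma finrank_box_add_le (κ : ℕ) :
    Module.finrank K (box K D w (m + κ)) ≤ Module.finrank K (box K D w m) + D * κ := by
  rw [finrank_box, finrank_box]
  calc ∑ i : Fin D, (m + κ + 1 - w * i) ≤ ∑ i : Fin D, (m + 1 - w * i + κ) := by
        gcongr; omega
    _ = _ := by simp [Finset.sum_add_distrib]

lemma box_mono {n : ℕ} (hmn : m ≤ n) : box K D w m ≤ box K D w n :=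
  inf_le_inf_left _ (weightLE_mono hmn)

lemma modByMonic_mem_box {M g : K[X][X]} (hM : M.Monic) (hMw : M ∈ weightLE K w (w * M.natDegree))
    (hg : g ∈ weightLE K w m) : g %ₘ M ∈ box K M.natDegree w m :=
  mem_box.2 ⟨degree_eq_natDegree hM.ne_zero ▸ degree_modByMonic_lt g hM,
    modByMonic_mem_weightLE hM hMw hg⟩

end Box

section Bezout

lemma finrank_add_finrank_le {K U V W : Type*} [Field K] [AddCommGroup U] [Module K U]
    [AddCommGroup V] [Module K V] [FiniteDimensional K V] [AddCommGroup W] [Module K W]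
    {f : U →ₗ[K] V} {g : V →ₗ[K] W} (hf : Function.Injective f) (hg : Function.Surjective g)
    (hgf : ∀ u, g (f u) = 0) : Module.finrank K U + Module.finrank K W ≤ Module.finrank K V := by
  have hle : LinearMap.range f ≤ LinearMap.ker g := by
    rintro _ ⟨u, rfl⟩
    exact hgf u
  have hker := Submodule.finrank_mono hle
  rw [LinearMap.finrank_range_of_inj hf] at hker
  have hrank := LinearMap.finrank_range_add_finrank_ker g
  rw [LinearMap.range_eq_top.2 hg, finrank_top] at hrank
  omega

variable {K : Type*} [Field K] {M Φ : K[X][X]}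

lemma exists_C_mem_span_pair (hM : M.Monic) (hirr : Irreducible M) (hMΦ : ¬ M ∣ Φ) :
    ∃ N : K[X], N ≠ 0 ∧ C N ∈ Ideal.span {M, Φ} := by
  have : IsDomain (AdjoinRoot M) := AdjoinRoot.isDomain_of_prime hirr.prime
  have : Module.Finite K[X] (AdjoinRoot M) := hM.finite_adjoinRoot
  have hne : AdjoinRoot.mk M Φ ≠ 0 := by rwa [Ne, AdjoinRoot.mk_eq_zero]
  obtain ⟨N, hN, hN0⟩ := Submodule.exists_mem_ne_zero_of_ne_bot <|
    Ideal.comap_ne_bot_of_integral_mem (R := K[X]) hne (Ideal.mem_span_singleton_self _)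
      (Algebra.IsIntegral.isIntegral _)
  refine ⟨N, hN0, ?_⟩
  obtain ⟨c, hc⟩ := Ideal.mem_span_singleton'.1 (Ideal.mem_comap.1 hN)
  obtain ⟨b, rfl⟩ := AdjoinRoot.mk_surjective c
  rw [AdjoinRoot.algebraMap_eq, ← AdjoinRoot.mk_C, ← map_mul, AdjoinRoot.mk_eq_mk] at hc
  obtain ⟨a, ha⟩ := hc
  exact Ideal.mem_span_pair.2 ⟨-a, b, by linear_combination ha⟩

variable {W : Type*} [AddCommGroup W] [Module K W] {w κ : ℕ}

lemma map_modByMonic_eq {π : K[X][X] →ₗ[K] W} (hker : ∀ g ∈ Ideal.span {M}, π g = 0)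
    (g : K[X][X]) : π (g %ₘ M) = π g := by
  rw [modByMonic_eq_sub_mul_div, map_sub,
    hker _ (Ideal.mul_mem_right _ _ (Ideal.mem_span_singleton_self M)), sub_zero]

lemma exists_forall_mem_box_map_eq [FiniteDimensional K W] (hM : M.Monic)
    (hMw : M ∈ weightLE K w (w * M.natDegree)) {π : K[X][X] →ₗ[K] W}
    (hπ : Function.Surjective π) (hker : ∀ g ∈ Ideal.span {M}, π g = 0) :
    ∃ m, ∀ x, ∃ g ∈ box K M.natDegree w m, π g = x := by
  let B := Module.finBasis K W
  choose g hg using fun i => hπ (B i)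
  choose n hn using fun i => exists_mem_weightLE w (g i)
  refine ⟨Finset.univ.sup n, fun x => ⟨∑ i, B.repr x i • (g i %ₘ M), ?_, ?_⟩⟩
  · exact sum_mem fun i _ => Submodule.smul_mem _ _ <| modByMonic_mem_box hM hMw <|
      weightLE_mono (Finset.le_sup (Finset.mem_univ i)) (hn i)
  · simp only [map_sum, map_smul, map_modByMonic_eq hker, hg, B.sum_repr]

lemma eq_zero_of_dvd_mul_of_mem_box {N : K[X]} (hM : M.Monic) (hN0 : N ≠ 0)
    (hN : C N ∈ Ideal.span {M, Φ}) {m : ℕ} {g : K[X][X]} (hg : g ∈ box K M.natDegree w m)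
    (hdvd : M ∣ g * Φ) : g = 0 := by
  obtain ⟨a, b, hab⟩ := Ideal.mem_span_pair.1 hN
  have hdvdN : M ∣ g * C N := by
    rw [← hab, show g * (a * M + b * Φ) = g * a * M + b * (g * Φ) by ring]
    exact dvd_add (dvd_mul_left _ _) (hdvd.mul_left b)
  by_contra hg0
  have hdeg : (g * C N).degree < M.degree := by
    rw [degree_mul, degree_C hN0, add_zero, degree_eq_natDegree hM.ne_zero]
    exact (mem_box.1 hg).1
  exact hM.not_dvd_of_degree_lt (mul_ne_zero hg0 (C_ne_zero.2 hN0)) hdeg hdvdN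

/-- Multiplication by `Φ` modulo `M` injects the box of weight `m` into the part of the box of
weight `m + κ` killed by `π`, and passing from the first to the second adds at most `κ` to each of
the `M.natDegree` columns. -/
theorem finrank_le_natDegree_mul [FiniteDimensional K W] (hM : M.Monic)
    (hMw : M ∈ weightLE K w (w * M.natDegree)) (hΦ : Φ ∈ weightLE K w κ) {N : K[X]} (hN0 : N ≠ 0)
    (hN : C N ∈ Ideal.span {M, Φ}) (π : K[X][X] →ₗ[K] W) (hπ : Function.Surjective π)
    (hker : ∀ g ∈ Ideal.span {M, Φ}, π g = 0) : Module.finrank K W ≤ M.natDegree * κ := by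
  have hkerM : ∀ g ∈ Ideal.span {M}, π g = 0 := fun g hg =>
    hker g (Ideal.span_mono (by simp) hg)
  obtain ⟨m, hm⟩ := exists_forall_mem_box_map_eq hM hMw hπ hkerM
  let mulMod : box K M.natDegree w m →ₗ[K] box K M.natDegree w (m + κ) :=
    (((modByMonicHom M) ∘ₗ LinearMap.mulRight K[X] Φ).restrictScalars K).restrict fun _ hg =>
      modByMonic_mem_box hM hMw (mul_mem_weightLE (mem_box.1 hg).2 hΦ)
  have hinj : Function.Injective mulMod := by
    rw [injective_iff_map_eq_zero]
    intro g hg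
    exact Subtype.ext <| eq_zero_of_dvd_mul_of_mem_box hM hN0 hN g.2 <|
      (modByMonic_eq_zero_iff_dvd hM).1 (congrArg Subtype.val hg)
  have hsurj : Function.Surjective (π.domRestrict (box K M.natDegree w (m + κ))) := fun x =>
    let ⟨g, hg, hgx⟩ := hm x
    ⟨⟨g, box_mono (Nat.le_add_right m κ) hg⟩, hgx⟩
  have hzero (g) : π.domRestrict _ (mulMod g) = 0 := (map_modByMonic_eq hkerM _).trans <|
    hker _ (Ideal.mul_mem_left _ _ (Ideal.subset_span (by simp)))
  have hcomplex := finrank_add_finrank_le (K := K)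
    (U := box K M.natDegree w m) (V := box K M.natDegree w (m + κ)) hinj hsurj hzero
  have := finrank_box_add_le (K := K) (D := M.natDegree) (w := w) (m := m) κ
  omega

end Bezout

section Branch

variable {K : Type*} [Field K]

/-- Substitution of the formal branch `s = s₀ + X`, `y = η` into a bivariate polynomial. -/
noncomputable def branchEval (s₀ : K) (η : K⟦X⟧) : K[X][X] →ₐ[K] K⟦X⟧ :=
  aevalAeval (PowerSeries.C s₀ + PowerSeries.X) η

lemma exists_branchEval_eq_zero {M : K[X][X]} (hM : M.Monic) {s₀ y₀ : K}
    (hroot : M.evalEval s₀ y₀ = 0) (hsimple : (derivative M).evalEval s₀ y₀ ≠ 0) :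
    ∃ η, branchEval s₀ η M = 0 := by
  let φ : K[X] →+* K⟦X⟧ := (aeval (PowerSeries.C s₀ + PowerSeries.X)).toRingHom
  have hφ : PowerSeries.constantCoeff.comp φ = evalRingHom s₀ := by ext <;> simp [φ]
  have heval (g : K[X][X]) : PowerSeries.constantCoeff ((g.map φ).eval (PowerSeries.C y₀)) =
      g.evalEval s₀ y₀ := by
    rw [eval_map, hom_eval₂, hφ, eval₂_evalRingHom, PowerSeries.constantCoeff_C]
  obtain ⟨η, hη, -⟩ := HenselianRing.is_henselian (I := Ideal.span {PowerSeries.X})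
    (M.map φ) (hM.map φ) (PowerSeries.C y₀)
    (by rw [Ideal.mem_span_singleton, PowerSeries.X_dvd_iff, heval, hroot])
    (by
      refine IsUnit.map _ (PowerSeries.isUnit_iff_constantCoeff.2 ?_)
      rwa [derivative_map, heval, isUnit_iff_ne_zero])
  refine ⟨η, ?_⟩
  have hbranch : (branchEval s₀ η).toRingHom = eval₂RingHom φ η := by
    ext <;> simp [branchEval, φ]
  rw [IsRoot, eval_map] at hη
  exact (congrArg (fun f => f M) hbranch).trans hη

variable {M : K[X][X]} {w κ : ℕ} {s₀ : K} {η : K⟦X⟧}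

lemma le_of_X_pow_dvd_branchEval (hM : M.Monic) (hirr : Irreducible M)
    (hMw : M ∈ weightLE K w (w * M.natDegree)) (hη : branchEval s₀ η M = 0) {g : K[X][X]}
    (hg : g ∈ box K M.natDegree w κ) (hg0 : g ≠ 0) {o : ℕ}
    (ho : PowerSeries.X ^ o ∣ branchEval s₀ η g) : o ≤ M.natDegree * κ := by
  have hMg : ¬ M ∣ g := hM.not_dvd_of_degree_lt hg0 <| by
    rw [degree_eq_natDegree hM.ne_zero]
    exact (mem_box.1 hg).1
  obtain ⟨N, hN0, hN⟩ := exists_C_mem_span_pair hM hirr hMg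
  let π : K[X][X] →ₗ[K] Fin o → K :=
    LinearMap.pi fun i => PowerSeries.coeff i.1 ∘ₗ (branchEval s₀ η).toLinearMap
  have hπ (h : K[X][X]) (i) : π h i = PowerSeries.coeff i.1 (branchEval s₀ η h) := rfl
  have hsurj : Function.Surjective π := by
    rw [← LinearMap.range_eq_top, eq_top_iff, ← (Pi.basisFun K (Fin o)).span_eq, Submodule.span_le]
    rintro _ ⟨i, rfl⟩
    have hX : branchEval s₀ η (C (X - C s₀)) = PowerSeries.X := by simp [branchEval]
    refine ⟨C (X - C s₀) ^ i.1, ?_⟩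
    ext j
    rw [hπ, map_pow, hX, PowerSeries.coeff_X_pow]
    simp [Pi.single_apply, Fin.ext_iff]
  have hker : ∀ h ∈ Ideal.span {M, g}, π h = 0 := by
    intro h hh
    obtain ⟨a, b, rfl⟩ := Ideal.mem_span_pair.1 hh
    ext i
    rw [hπ, map_add, map_mul, map_mul, hη, mul_zero, zero_add]
    exact PowerSeries.X_pow_dvd_iff.1 (ho.mul_left _) i i.2
  simpa using finrank_le_natDegree_mul hM hMw (mem_box.1 hg).2 hN0 hN π hsurj hker

lemma branchEval_ne_zero_of_mem_box (hM : M.Monic) (hirr : Irreducible M)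
    (hMw : M ∈ weightLE K w (w * M.natDegree)) (hη : branchEval s₀ η M = 0) {g : K[X][X]}
    (hg : g ∈ box K M.natDegree w κ) (hg0 : g ≠ 0) : branchEval s₀ η g ≠ 0 := fun h0 =>
  (M.natDegree * κ).lt_succ_self.not_ge <|
    le_of_X_pow_dvd_branchEval hM hirr hMw hη hg hg0 (h0 ▸ dvd_zero _)

lemma exists_eq_X_pow_mul_of_ne_zero {R ι : Type*} [CommRing R] [Finite ι] {θ : ι → R⟦X⟧}
    (hθ : θ ≠ 0) : ∃ (k : ℕ) (τ : ι → R⟦X⟧),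
      (∀ i, θ i = PowerSeries.X ^ k * τ i) ∧ ∃ i, PowerSeries.constantCoeff (τ i) ≠ 0 := by
  obtain ⟨j, hj⟩ := Function.ne_iff.1 hθ
  have : Nonempty ι := ⟨j⟩
  obtain ⟨i, hi⟩ := Finite.exists_min fun i => (θ i).order
  have hi0 : θ i ≠ 0 := fun h => hj <| by
    simpa [h, PowerSeries.order_eq_top] using hi j
  have hdvd (l : ι) : PowerSeries.X ^ (θ i).order.toNat ∣ θ l := by
    refine PowerSeries.X_pow_dvd_iff.2 fun m hm => PowerSeries.coeff_of_lt_order m ?_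
    calc (m : ℕ∞) < (θ i).order.toNat := by exact_mod_cast hm
      _ ≤ (θ i).order := ENat.natCast_toNat_le_self _
      _ ≤ (θ l).order := hi l
  choose τ hτ using hdvd
  refine ⟨_, τ, hτ, i, fun h0 => PowerSeries.coeff_order hi0 ?_⟩
  rw [← h0, ← PowerSeries.coeff_zero_eq_constantCoeff_apply]
  refine (congrArg _ (hτ i)).trans ?_
  simpa using PowerSeries.coeff_X_pow_mul (τ i) (θ i).order.toNat 0

variable {p : ℕ} [ExpChar K p]

instance : ExpChar K⟦X⟧ p := expChar_of_injective_algebraMap (algebraMap K K⟦X⟧).injective p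

lemma X_pow_dvd_pow_sub_C (τ : K⟦X⟧) (v : ℕ) :
    PowerSeries.X ^ p ^ v ∣
      τ ^ p ^ v - PowerSeries.C (PowerSeries.constantCoeff τ ^ p ^ v) := by
  rw [map_pow, ← sub_pow_expChar_pow]
  exact pow_dvd_pow_of_dvd (PowerSeries.X_dvd_iff.2 (by simp)) _

/-- If the branch kills `∑ bᵢ gᵢ ^ p ^ v` then, after removing the common order of vanishing of the
`gᵢ`, it makes `∑ cᵢ bᵢ` vanish to order `p ^ v` for suitable constants `cᵢ`. -/
theorem not_dvd_sum_mul_pow_expChar_pow {ι : Type*} [Fintype ι] {v μ : ℕ} (hM : M.Monic)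
    (hirr : Irreducible M) (hMw : M ∈ weightLE K w (w * M.natDegree))
    (hη : branchEval s₀ η M = 0) {b g : ι → K[X][X]} (hb : LinearIndependent K b)
    (hbκ : ∀ i, b i ∈ box K M.natDegree w κ) (hgμ : ∀ i, g i ∈ box K M.natDegree w μ) (hg : g ≠ 0)
    (hv : M.natDegree * κ < p ^ v) : ¬ M ∣ ∑ i, b i * g i ^ p ^ v := by
  rintro ⟨c, hc⟩
  have hθ : (fun i => branchEval s₀ η (g i)) ≠ 0 := by
    obtain ⟨i, hi⟩ := Function.ne_iff.1 hg
    exact Function.ne_iff.2 ⟨i, branchEval_ne_zero_of_mem_box hM hirr hMw hη (hgμ i) hi⟩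
  obtain ⟨k, τ, hτ, j, hj⟩ := exists_eq_X_pow_mul_of_ne_zero hθ
  have hsum : ∑ i, branchEval s₀ η (b i) * τ i ^ p ^ v = 0 := by
    have hmul := congrArg (branchEval s₀ η) hc
    simp only [map_mul, hη, zero_mul, map_sum, map_pow, hτ, mul_pow,
      mul_left_comm _ ((PowerSeries.X ^ k) ^ p ^ v), ← Finset.mul_sum] at hmul
    exact (mul_eq_zero.1 hmul).resolve_left (pow_ne_zero _ (pow_ne_zero _ PowerSeries.X_ne_zero))
  let a : ι → K := fun i => PowerSeries.constantCoeff (τ i) ^ p ^ v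
  have hdvd : PowerSeries.X ^ p ^ v ∣ branchEval s₀ η (∑ i, a i • b i) := by
    rw [← dvd_neg, ← zero_sub, ← hsum, map_sum, ← Finset.sum_sub_distrib]
    refine Finset.dvd_sum fun i _ => ?_
    rw [map_smul, PowerSeries.smul_eq_C_mul, mul_comm, ← sub_mul]
    exact (X_pow_dvd_pow_sub_C (τ i) v).mul_right _
  have hne : ∑ i, a i • b i ≠ 0 := fun h0 =>
    pow_ne_zero _ hj (Fintype.linearIndependent_iff.1 hb a h0 j)
  have hmem : ∑ i, a i • b i ∈ box K M.natDegree w κ :=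
    sum_mem fun i _ => Submodule.smul_mem _ _ (hbκ i)
  exact hv.not_ge (le_of_X_pow_dvd_branchEval hM hirr hMw hη hmem hne hdvd)

end Branch

section AuxiliaryPolynomial

lemma sub_mul_sum_map_divX_iterate {R A : Type*} [CommRing R] [CommRing A] {φ ψ : R[X] →+* A}
    (hφψ : ∀ c, φ (C c) = ψ (C c)) {n : ℕ} {M : R[X]} (hM : M.natDegree ≤ n) :
    (ψ X - φ X) * ∑ j ∈ Finset.range n, φ (divX^[j + 1] M) * ψ X ^ j = ψ M - φ M := by
  induction n generalizing M with
  | zero => rw [eq_C_of_natDegree_le_zero hM, hφψ]; simp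
  | succ n ih =>
    have hdiv := ih (M := divX M) (by rw [natDegree_divX_eq_natDegree_tsub_one]; omega)
    have hφ : φ M = φ (divX M) * φ X + φ (C (M.coeff 0)) := by
      rw [← map_mul, ← map_add, divX_mul_X_add]
    have hψ : ψ M = ψ (divX M) * ψ X + φ (C (M.coeff 0)) := by
      rw [hφψ, ← map_mul, ← map_add, divX_mul_X_add]
    rw [Finset.sum_range_succ', hφ, hψ]
    simp only [pow_succ, ← mul_assoc, ← Finset.sum_mul]
    simp only [Function.iterate_succ_apply, Function.iterate_zero, id_eq] at hdiv ⊢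
    linear_combination ψ X * hdiv

lemma coeff_divX_iterate {R : Type*} [Semiring R] (f : R[X]) (j i : ℕ) :
    (divX^[j] f).coeff i = f.coeff (i + j) := by
  induction j generalizing f with
  | zero => rfl
  | succ j ih => rw [Function.iterate_succ_apply, ih, coeff_divX, add_assoc]

lemma divX_iterate_natDegree {R : Type*} [Semiring R] {f : R[X]} (hf : f.Monic) :
    divX^[f.natDegree] f = 1 := by
  ext i
  rw [coeff_divX_iterate, coeff_one]
  split_ifs with hi
  · rw [hi, zero_add, hf.coeff_natDegree]
  · exact coeff_eq_zero_of_natDegree_lt (by omega)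

lemma divX_iterate_mem_weightLE {R : Type*} [CommRing R] {w m : ℕ} {f : R[X][X]} {j : ℕ}
    (hf : f ∈ weightLE R w (m + w * j)) : divX^[j] f ∈ weightLE R w m := by
  intro i a hia
  rw [coeff_divX_iterate] at hia
  have := hf _ _ hia
  rw [mul_add] at this
  omega

variable {K ι : Type*} [Field K] [Fintype ι]

/-- The coefficient of `z ^ j` in `∑ bᵢ(y) ^ P * gᵢ(z)`. -/
noncomputable def slice (b : ι → K[X][X]) (P j : ℕ) : (ι → K[X][X]) →ₗ[K[X]] K[X][X] :=
  Fintype.linearCombination K[X] (fun i => b i ^ P) ∘ₗ (lcoeff K[X] j).compLeft ι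

variable {b g : ι → K[X][X]} {P j w κ μ D : ℕ} {M : K[X][X]}

lemma slice_apply : slice b P j g = ∑ i, C ((g i).coeff j) * b i ^ P := by
  simp [slice, Fintype.linearCombination_apply, smul_eq_C_mul]

lemma slice_mul_mem_weightLE {f : K[X][X]} {c : ℕ} (hb : ∀ i, b i ∈ weightLE K w κ)
    (hg : ∀ i, g i ∈ weightLE K w μ) (hf : f ∈ weightLE K w c) (hc : c ≤ w * j) :
    slice b P j g * f ∈ weightLE K w (P * κ + μ) := by
  rw [slice_apply, Finset.sum_mul]
  refine sum_mem fun i _ => ?_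
  by_cases hi : (g i).coeff j = 0
  · simp [hi]
  have hdeg := natDegree_coeff_add_le_of_mem_weightLE (hg i) hi
  have hC : C ((g i).coeff j) ∈ weightLE K w ((g i).coeff j).natDegree := by
    simpa using C_mul_X_pow_mem_weightLE (w := w) (f := (g i).coeff j) (i := 0) le_rfl
  exact weightLE_mono (by omega)
    (mul_mem_weightLE (mul_mem_weightLE hC (pow_mem_weightLE (hb i) P)) hf)

/-- The `j`-th coefficient of `∑ bᵢ(y) ^ P * gᵢ(z)`, as a polynomial in `z`, after a multiple of
`(M(z) - M(y)) / (z - y) = ∑ z ^ j * (divX^[j + 1] M)(y)` has been subtracted to cancel the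
coefficient of degree `M.natDegree - 1`. On the curve `M = 0` and for `z = y ^ Q` this multiple
vanishes. -/
noncomputable def reducedSlice (b : ι → K[X][X]) (M : K[X][X]) (P j : ℕ) :
    (ι → K[X][X]) →ₗ[K[X]] K[X][X] :=
  slice b P j - LinearMap.mulRight K[X] (divX^[j + 1] M) ∘ₗ slice b P (M.natDegree - 1)

lemma reducedSlice_mem_weightLE (hMw : M ∈ weightLE K w (w * M.natDegree))
    (hb : ∀ i, b i ∈ weightLE K w κ) (hg : ∀ i, g i ∈ weightLE K w μ) (hj : j < M.natDegree) :
    reducedSlice b M P j g ∈ weightLE K w (P * κ + μ) := by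
  have hone : (1 : K[X][X]) ∈ weightLE K w 0 := by
    simpa using C_mul_X_pow_mem_weightLE (R := K) (w := w) (f := 1) (i := 0) (m := 0) (by simp)
  refine sub_mem ?_ ?_
  · simpa using slice_mul_mem_weightLE (P := P) hb hg hone (Nat.zero_le (w * j))
  · refine slice_mul_mem_weightLE hb hg (c := w * (M.natDegree - (j + 1)))
      (divX_iterate_mem_weightLE ?_) (Nat.mul_le_mul_left w (by omega))
    rwa [← mul_add, Nat.sub_add_cancel hj]

/-- The conditions are linear in `g`; for `j = M.natDegree - 1` they hold automatically. -/
lemma exists_forall_dvd_reducedSlice (hM : M.Monic) (hMw : M ∈ weightLE K w (w * M.natDegree))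
    (hb : ∀ i, b i ∈ weightLE K w κ)
    (hdim : (M.natDegree - 1) * Module.finrank K (box K M.natDegree w (P * κ + μ)) <
      Fintype.card ι * Module.finrank K (box K M.natDegree w μ)) :
    ∃ g : ι → K[X][X], g ≠ 0 ∧ (∀ i, g i ∈ box K M.natDegree w μ) ∧
      ∀ j < M.natDegree, M ∣ reducedSlice b M P j g := by
  let B := box K M.natDegree w μ
  let reduction (j : Fin (M.natDegree - 1)) :
      (ι → B) →ₗ[K] box K M.natDegree w (P * κ + μ) :=
    LinearMap.codRestrict _
      ((modByMonicHom M ∘ₗ reducedSlice b M P j).restrictScalars K ∘ₗ B.subtype.compLeft ι)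
      fun g => modByMonic_mem_box hM hMw <|
        reducedSlice_mem_weightLE hMw hb (fun i => (mem_box.1 (g i).2).2) (by omega)
  obtain ⟨g, hgker, hg0⟩ := Submodule.exists_mem_ne_zero_of_ne_bot <|
    LinearMap.ker_ne_bot_of_finrank_lt (K := K) (V := ι → B)
      (V₂ := Fin (M.natDegree - 1) → box K M.natDegree w (P * κ + μ))
      (f := LinearMap.pi reduction) <| by
      rw [Module.finrank_pi_fintype, Module.finrank_pi_fintype]
      simpa using hdim
  refine ⟨fun i => g i, fun h0 => hg0 ?_, fun i => (g i).2, fun j hj => ?_⟩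
  · ext i : 2
    exact congrFun h0 i
  rcases Nat.lt_or_ge j (M.natDegree - 1) with hlt | hge
  · exact (modByMonic_eq_zero_iff_dvd hM).1 <|
      congrArg Subtype.val (congrFun (LinearMap.mem_ker.1 hgker) ⟨j, hlt⟩)
  · obtain rfl : j = M.natDegree - 1 := by omega
    simp [reducedSlice, Nat.sub_add_cancel (Nat.one_le_of_lt hj), divX_iterate_natDegree hM]

variable {A : Type*} [CommRing A] [Algebra K A]

lemma map_slice_of_dvd_reducedSlice {φ : K[X][X] →ₐ[K] A} (hφM : φ M = 0)
    (hdvd : M ∣ reducedSlice b M P j g) :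
    φ (slice b P j g) = φ (slice b P (M.natDegree - 1) g) * φ (divX^[j + 1] M) := by
  obtain ⟨c, hc⟩ := hdvd
  have := congrArg φ hc
  rwa [map_mul, hφM, zero_mul, reducedSlice, LinearMap.sub_apply, map_sub, sub_eq_zero,
    LinearMap.comp_apply, LinearMap.mulRight_apply, map_mul] at this

variable {p u v : ℕ} [ExpChar K p] [Fintype K]

lemma map_C_pow_card {φ : K[X][X] →ₐ[K] A} {s : K} (hs : φ (C X) = algebraMap K A s) (f : K[X]) :
    φ (C f) ^ Fintype.card K = φ (C f) := by
  have hC : φ (C f) = algebraMap K A (f.eval s) := by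
    have : φ.comp CAlgHom = (Algebra.ofId K A).comp (aeval s) := by
      ext
      simp [hs, Algebra.ofId_apply]
    simpa [Algebra.ofId_apply, aeval_def, eval₂_eq_eval_map] using congrArg (fun ψ => ψ f) this
  rw [hC, ← map_pow, FiniteField.pow_card]

lemma map_pow_card_eq_sum {φ : K[X][X] →ₐ[K] A} {s : K} (hs : φ (C X) = algebraMap K A s)
    {f : K[X][X]} (hf : f.degree < D) :
    φ f ^ Fintype.card K =
      ∑ j ∈ Finset.range D, φ (C (f.coeff j)) * (φ X ^ Fintype.card K) ^ j := by
  rcases eq_or_ne f 0 with rfl | hf0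
  · simp
  have hlt := (natDegree_lt_iff_degree_lt hf0).2 hf
  change (FiniteField.frobeniusAlgHom K A).comp φ f = _
  conv_lhs => rw [as_sum_range_C_mul_X_pow' f hlt, map_sum]
  refine Finset.sum_congr rfl fun j _ => ?_
  rw [map_mul, map_pow]
  exact congrArg (· * _) (map_C_pow_card hs _)

-- The sum is `(M(y ^ Q) - M(y)) / (y ^ Q - y)`.
lemma sum_map_divX_iterate_mul_pow_card_eq_zero {φ : K[X][X] →ₐ[K] A} {s : K}
    (hs : φ (C X) = algebraMap K A s) (hφM : φ M = 0)
    (hunit : IsUnit (φ X ^ Fintype.card K - φ X)) :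
    ∑ j ∈ Finset.range M.natDegree, φ (divX^[j + 1] M) * (φ X ^ Fintype.card K) ^ j = 0 := by
  set Q := Fintype.card K
  have htelescope := sub_mul_sum_map_divX_iterate (φ := φ.toRingHom)
    (ψ := ((FiniteField.frobeniusAlgHom K A).comp φ).toRingHom)
    (fun f => (map_C_pow_card hs f).symm) (le_refl M.natDegree)
  change (φ X ^ Q - φ X) * ∑ j ∈ _, φ (divX^[j + 1] M) * (φ X ^ Q) ^ j = φ M ^ Q - φ M
    at htelescope
  rwa [hφM, zero_pow Fintype.card_ne_zero, sub_zero, hunit.mul_right_eq_zero] at htelescope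

/-- Raising `∑ bᵢ gᵢ ^ p ^ v` to the power `p ^ u` turns the `gᵢ(y)` into `gᵢ(y ^ Q)`, and the
reduced slices were chosen to make the result a multiple of `(M(y ^ Q) - M(y)) / (y ^ Q - y)`. -/
lemma map_sum_mul_pow_eq_zero [IsReduced A] (hcard : Fintype.card K = p ^ u * p ^ v)
    {φ : K[X][X] →ₐ[K] A} {s : K} (hs : φ (C X) = algebraMap K A s) (hφM : φ M = 0)
    (hunit : IsUnit (φ X ^ Fintype.card K - φ X)) (hg : ∀ i, (g i).degree < M.natDegree)
    (hdvd : ∀ j < M.natDegree, M ∣ reducedSlice b M (p ^ u) j g) :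
    φ (∑ i, b i * g i ^ p ^ v) = 0 := by
  nontriviality A
  have : ExpChar A p := expChar_of_injective_algebraMap (algebraMap K A).injective p
  set Q := Fintype.card K with hQ
  refine eq_zero_of_pow_eq_zero (n := p ^ u) ?_
  calc φ (∑ i, b i * g i ^ p ^ v) ^ p ^ u
      = ∑ i, φ (b i) ^ p ^ u * φ (g i) ^ Q := by
        rw [map_sum, sum_pow_char_pow]
        simp only [map_mul, map_pow, mul_pow, ← pow_mul, hcard, mul_comm]
    _ = ∑ j ∈ Finset.range M.natDegree, φ (slice b (p ^ u) j g) * (φ X ^ Q) ^ j := by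
        simp only [hQ, fun i => map_pow_card_eq_sum hs (hg i), Finset.mul_sum, slice_apply,
          map_sum, map_mul, map_pow, Finset.sum_mul]
        rw [Finset.sum_comm]
        exact Finset.sum_congr rfl fun j _ => Finset.sum_congr rfl fun i _ => by ring
    _ = φ (slice b (p ^ u) (M.natDegree - 1) g) *
          ∑ j ∈ Finset.range M.natDegree, φ (divX^[j + 1] M) * (φ X ^ Q) ^ j := by
        rw [Finset.mul_sum]
        refine Finset.sum_congr rfl fun j hj => ?_
        rw [map_slice_of_dvd_reducedSlice hφM (hdvd j (Finset.mem_range.1 hj)), mul_assoc]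
    _ = 0 := by rw [sum_map_divX_iterate_mul_pow_card_eq_zero hs hφM hunit, mul_zero]

end AuxiliaryPolynomial

section Fibers

variable {K : Type*} [Field K] {M : K[X][X]} {s : K}

/-- Restriction of bivariate polynomials to the fibre of the curve `M = 0` above `s`. -/
noncomputable def toFiber (M : K[X][X]) (s : K) :
    K[X][X] →ₐ[K] AdjoinRoot (M.map (evalRingHom s)) :=
  (AdjoinRoot.mkₐ _).comp (mapAlgHom (aeval s))

lemma toFiber_apply (g : K[X][X]) :
    toFiber M s g = AdjoinRoot.mk (M.map (evalRingHom s)) (g.map (evalRingHom s)) := rfl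

lemma toFiber_C_X : toFiber M s (C X) = algebraMap K _ s := by
  simp [toFiber_apply, AdjoinRoot.algebraMap_eq]

lemma toFiber_self : toFiber M s M = 0 := AdjoinRoot.mk_self

lemma isReduced_adjoinRoot_of_squarefree {f : K[X]} (hf : Squarefree f) :
    IsReduced (AdjoinRoot f) := by
  exact (Ideal.isRadical_iff_quotient_reduced _).1 (isRadical_iff_span_singleton.1 hf.isRadical)

lemma isUnit_root_pow_card_sub_root [Fintype K] {f : K[X]} (hf : ∀ a, f.eval a ≠ 0) :
    IsUnit (AdjoinRoot.root f ^ Fintype.card K - AdjoinRoot.root f) := by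
  have hprod : X ^ Fintype.card K - X = ∏ a : K, (X - C a) := by
    have hdeg := FiniteField.X_pow_card_sub_X_natDegree_eq K (Fintype.one_lt_card (α := K))
    have hroots := FiniteField.roots_X_pow_card_sub_X K
    have hmonic : (X ^ Fintype.card K - X : K[X]).Monic :=
      monic_X_pow_sub (by simpa using Fintype.one_lt_card)
    rw [← prod_multiset_X_sub_C_of_monic_of_roots_card_eq hmonic (by simp [hroots, hdeg]), hroots]
    rfl
  have hcoprime : IsCoprime f (X ^ Fintype.card K - X) := by
    rw [hprod]
    refine IsCoprime.prod_right fun a _ => ?_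
    rw [isCoprime_comm, (irreducible_X_sub_C a).coprime_iff_not_dvd, dvd_iff_isRoot]
    exact hf a
  obtain ⟨a, b, hab⟩ := hcoprime
  refine IsUnit.of_mul_eq_one (AdjoinRoot.mk f b) ?_
  have := congrArg (AdjoinRoot.mk f) hab
  simpa [mul_comm] using this

lemma pi_toFiber_surjective (M : K[X][X]) (G : Finset K) :
    Function.Surjective
      (LinearMap.pi fun s : G => (toFiber M (s : K)).toLinearMap : K[X][X] →ₗ[K] _) := by
  classical
  intro x
  choose h hh using fun s => AdjoinRoot.mk_surjective (x s)
  refine ⟨∑ s : G, C (Lagrange.basis G id s) * (h s).map C, ?_⟩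
  ext s
  have hterm (i : G) : toFiber M (s : K) (C (Lagrange.basis G id (i : K)) * (h i).map C) =
      if i = s then x s else 0 := by
    have hC : evalRingHom (s : K) (Lagrange.basis G id (i : K)) = if i = s then 1 else 0 := by
      split_ifs with hi
      · subst hi
        exact Lagrange.eval_basis_self (Set.injOn_id _) i.2
      · exact Lagrange.eval_basis_of_ne (v := id) (Subtype.coe_ne_coe.2 hi) s.2
    rw [map_mul, toFiber_apply, toFiber_apply, map_C, hC, map_map]
    split_ifs with hi
    · subst hi
      have : (evalRingHom (i : K)).comp C = RingHom.id K := by ext; simp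
      rw [this, map_id, ← hh, C_1, map_one, one_mul]
    · simp
  simp [hterm]

lemma card_le_of_forall_toFiber_eq_zero {w κ : ℕ} {Φ : K[X][X]} (hM : M.Monic)
    (hirr : Irreducible M) (hMw : M ∈ weightLE K w (w * M.natDegree)) (hΦ : Φ ∈ weightLE K w κ)
    (hMΦ : ¬ M ∣ Φ) {G : Finset K} (hG : ∀ s ∈ G, toFiber M s Φ = 0) : G.card ≤ κ := by
  obtain ⟨N, hN0, hN⟩ := exists_C_mem_span_pair hM hirr hMΦ
  have hdim (s : K) : Module.finrank K (AdjoinRoot (M.map (evalRingHom s))) = M.natDegree := by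
    rw [(AdjoinRoot.powerBasis' (hM.map _)).finrank, AdjoinRoot.powerBasis'_dim, hM.natDegree_map]
  have (s : K) : FiniteDimensional K (AdjoinRoot (M.map (evalRingHom s))) :=
    (hM.map _).finite_adjoinRoot
  have hrank := finrank_le_natDegree_mul hM hMw hΦ hN0 hN _ (pi_toFiber_surjective M G) <| by
    intro g hg
    obtain ⟨a, b, rfl⟩ := Ideal.mem_span_pair.1 hg
    ext s
    simp [toFiber_self, hG s s.2]
  rw [Module.finrank_pi_fintype] at hrank
  simp only [hdim, Finset.sum_const, Finset.card_univ, Fintype.card_coe, smul_eq_mul] at hrank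
  rw [mul_comm] at hrank
  have hpos : 0 < M.natDegree := hM.natDegree_pos.2 hirr.ne_one
  exact Nat.le_of_mul_le_mul_left hrank hpos

lemma exists_linearIndependent_fin {V : Type*} [AddCommGroup V] [Module K V] (W : Submodule K V)
    [FiniteDimensional K W] : ∃ b : Fin (Module.finrank K W) → V,
      (∀ i, b i ∈ W) ∧ LinearIndependent K b :=
  let B := Module.finBasis K W
  ⟨fun i => B i, fun i => (B i).2, B.linearIndependent.map' W.subtype W.ker_subtype⟩

/-- The Stepanov–Bombieri bound: when the fibres above `G` have no rational point, the auxiliary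
polynomial vanishes on all of them. -/
theorem card_le_of_forall_fiber_no_root [Fintype K] {p u v w κ μ : ℕ} [ExpChar K p] {s₀ y₀ : K}
    (hcard : Fintype.card K = p ^ u * p ^ v) (hM : M.Monic) (hirr : Irreducible M)
    (hMw : M ∈ weightLE K w (w * M.natDegree)) (hroot : M.evalEval s₀ y₀ = 0)
    (hsimple : (derivative M).evalEval s₀ y₀ ≠ 0) (hv : M.natDegree * κ < p ^ v)
    (hdim : (M.natDegree - 1) * Module.finrank K (box K M.natDegree w (p ^ u * κ + μ)) <
      Module.finrank K (box K M.natDegree w κ) * Module.finrank K (box K M.natDegree w μ))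
    {G : Finset K} (hsep : ∀ s ∈ G, Squarefree (M.map (evalRingHom s)))
    (hG : ∀ s ∈ G, ∀ y, M.evalEval s y ≠ 0) : G.card ≤ κ + p ^ v * μ := by
  obtain ⟨η, hη⟩ := exists_branchEval_eq_zero hM hroot hsimple
  obtain ⟨b, hb, hlin⟩ := exists_linearIndependent_fin (box K M.natDegree w κ)
  have hbw i := (mem_box.1 (hb i)).2
  obtain ⟨g, hg0, hg, hdvd⟩ := exists_forall_dvd_reducedSlice hM hMw hbw (P := p ^ u) (μ := μ) <| by
    rwa [Fintype.card_fin]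
  have hgw i := (mem_box.1 (hg i)).2
  refine card_le_of_forall_toFiber_eq_zero hM hirr hMw
    (sum_mem fun i _ => mul_mem_weightLE (hbw i) (pow_mem_weightLE (hgw i) (p ^ v)))
    (not_dvd_sum_mul_pow_expChar_pow hM hirr hMw hη hlin hb hg hg0 hv) fun s hs => ?_
  have := isReduced_adjoinRoot_of_squarefree (hsep s hs)
  refine map_sum_mul_pow_eq_zero hcard toFiber_C_X toFiber_self ?_ (fun i => (mem_box.1 (hg i)).1)
    hdvd
  have hunit := isUnit_root_pow_card_sub_root (f := M.map (evalRingHom s)) fun y => by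
    rw [map_evalRingHom_eval]
    exact hG s hs y
  simpa [toFiber_apply] using hunit

lemma exists_monic_irreducible_dvd {R : Type*} [CommRing R] [IsDomain R] {f : R[X][X]}
    (hf : f.Monic) {s y : R} (hroot : f.evalEval s y = 0) :
    ∃ M : R[X][X], M.Monic ∧ Irreducible M ∧ M ∣ f ∧ M.evalEval s y = 0 := by
  classical
  have hex : ∃ n, ∃ M : R[X][X], M.Monic ∧ M ∣ f ∧ M.evalEval s y = 0 ∧ M.natDegree = n :=
    ⟨_, f, hf, dvd_rfl, hroot, rfl⟩
  obtain ⟨M, hM, hMf, hMroot, hdeg⟩ := Nat.find_spec hex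
  have hmin {g : R[X][X]} (hg : g.Monic) (hgM : g ∣ M) (hgroot : g.evalEval s y = 0) :
      M.natDegree ≤ g.natDegree :=
    hdeg ▸ Nat.find_min' hex ⟨g, hg, hgM.trans hMf, hgroot, rfl⟩
  refine ⟨M, hM, hM.irreducible_iff_natDegree.2 ⟨?_, fun g h hg hh hgh => ?_⟩, hMf, hMroot⟩
  · rintro rfl
    simp at hMroot
  have hadd : g.natDegree + h.natDegree = M.natDegree := by rw [← hg.natDegree_mul hh, hgh]
  have hgh0 : g.evalEval s y * h.evalEval s y = 0 := by rw [← evalEval_mul, hgh, hMroot]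
  rcases mul_eq_zero.1 hgh0 with hg0 | hh0
  · have := hmin hg (hgh ▸ dvd_mul_right g h) hg0
    omega
  · have := hmin hh (hgh ▸ dvd_mul_left h g) hh0
    omega

theorem exists_card_le_card_filter_add [Fintype K] [DecidableEq K] {p w : ℕ} [ExpChar K p]
    {f : K[X][X]} (hf : f.Monic) (hfw : f ∈ weightLE K w (w * f.natDegree)) {s₀ y₀ : K}
    (hroot : f.evalEval s₀ y₀ = 0) (hsimple : (derivative f).evalEval s₀ y₀ ≠ 0) {G : Finset K}
    (hsep : ∀ s ∈ G, (f.map (evalRingHom s)).Separable) :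
    ∃ D, 0 < D ∧ D ≤ f.natDegree ∧ ∀ u v κ μ, Fintype.card K = p ^ u * p ^ v → D * κ < p ^ v →
      (D - 1) * Module.finrank K (box K D w (p ^ u * κ + μ)) <
        Module.finrank K (box K D w κ) * Module.finrank K (box K D w μ) →
      G.card ≤ {s ∈ G | ∃ y, f.evalEval s y = 0}.card + (κ + p ^ v * μ) := by
  obtain ⟨M, hM, hirr, hMf, hMroot⟩ := exists_monic_irreducible_dvd hf hroot
  have hMsimple : (derivative M).evalEval s₀ y₀ ≠ 0 := by
    obtain ⟨c, rfl⟩ := hMf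
    rw [derivative_mul, evalEval_add, evalEval_mul, evalEval_mul, hMroot, zero_mul, add_zero]
      at hsimple
    exact left_ne_zero_of_mul hsimple
  refine ⟨M.natDegree, hM.natDegree_pos.2 hirr.ne_one, natDegree_le_of_dvd hMf hf.ne_zero,
    fun u v κ μ hcard hv hdim => ?_⟩
  rw [← Finset.card_filter_add_card_filter_not (s := G) fun s => ∃ y, f.evalEval s y = 0]
  refine Nat.add_le_add_left (card_le_of_forall_fiber_no_root hcard hM hirr
    (mem_weightLE_of_dvd hM hf hfw hMf) hMroot hMsimple hv hdim (fun s hs => ?_)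
    fun s hs y hy => ?_) _
  · exact (hsep s (Finset.mem_filter.1 hs).1).squarefree.squarefree_of_dvd
      (Polynomial.map_dvd _ hMf)
  · exact (Finset.mem_filter.1 hs).2
      ⟨y, zero_dvd_iff.1 (hy ▸ evalEval_dvd s y hMf)⟩

end Fibers

section Bound

variable {K : Type*} [Field K] {δ m P A L : ℕ}

lemma le_finrank_box_two : (δ + 1) * (m + 1) ≤ Module.finrank K (box K (δ + 1) 2 (m + δ)) := by
  have hsum (D n : ℕ) : D * (n + 2) ≤ ∑ i ∈ Finset.range D, (n + 1 - 2 * i) + D * D := by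
    induction D with
    | zero => simp
    | succ D ih =>
      rw [Finset.sum_range_succ]
      ring_nf at ih ⊢
      omega
  rw [finrank_box, ← Finset.sum_range fun i => m + δ + 1 - 2 * i]
  linarith [hsum (δ + 1) (m + δ)]

lemma finrank_box_two (hm : δ ≤ m) :
    Module.finrank K (box K (δ + 1) 2 (m + δ)) = (δ + 1) * (m + 1) := by
  have hsum (D n : ℕ) (hD : 2 * D ≤ n + 2) :
      ∑ i ∈ Finset.range D, (n + 1 - 2 * i) + D * D = D * (n + 2) := by
    induction D with
    | zero => simp
    | succ D ih =>
      have := ih (by omega)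
      rw [Finset.sum_range_succ]
      ring_nf at this ⊢
      omega
  rw [finrank_box, ← Finset.sum_range fun i => m + δ + 1 - 2 * i]
  linarith [hsum (δ + 1) (m + δ) (by omega)]

lemma mul_finrank_box_two_lt (hP : 0 < P)
    (h : δ * (P * (A + δ)) < (L + 1) * ((δ + 1) * A + 1)) :
    δ * Module.finrank K (box K (δ + 1) 2 (P * (A + δ) + (L + δ))) <
      Module.finrank K (box K (δ + 1) 2 (A + δ)) * Module.finrank K (box K (δ + 1) 2 (L + δ)) := by
  have hδ : δ ≤ P * (A + δ) + L := by nlinarith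
  calc δ * Module.finrank K (box K (δ + 1) 2 (P * (A + δ) + (L + δ)))
      = (δ + 1) * (δ * (P * (A + δ)) + δ * (L + 1)) := by
        rw [← add_assoc, finrank_box_two hδ]
        ring
    _ < (δ + 1) * ((L + 1) * ((δ + 1) * A + 1) + δ * (L + 1)) := by gcongr
    _ = (δ + 1) * (A + 1) * ((δ + 1) * (L + 1)) := by ring
    _ ≤ _ := Nat.mul_le_mul le_finrank_box_two le_finrank_box_two

lemma exists_mul_finrank_box_two_lt {P' : ℕ} (hP : 0 < P) (hlarge : (δ + 1) ^ 2 < P') :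
    ∃ A L, (δ + 1) * (A + δ) < P' ∧ P' ≤ (δ + 1) * (A + δ + 1) ∧
      L * ((δ + 1) * A + 1) ≤ δ * (P * (A + δ)) ∧
      δ * Module.finrank K (box K (δ + 1) 2 (P * (A + δ) + (L + δ))) <
        Module.finrank K (box K (δ + 1) 2 (A + δ)) *
          Module.finrank K (box K (δ + 1) 2 (L + δ)) := by
  obtain ⟨A, hA⟩ : ∃ A, (P' - 1) / (δ + 1) = A + δ := by
    refine ⟨(P' - 1) / (δ + 1) - δ, (Nat.sub_add_cancel ?_).symm⟩
    rw [Nat.le_div_iff_mul_le δ.succ_pos]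
    exact Nat.le_sub_one_of_lt (by nlinarith)
  have hle : (δ + 1) * (A + δ) ≤ P' - 1 := hA ▸ Nat.mul_div_le (P' - 1) (δ + 1)
  have hlt : P' - 1 < (δ + 1) * (A + δ + 1) := hA ▸ Nat.lt_mul_div_succ (P' - 1) δ.succ_pos
  refine ⟨A, δ * (P * (A + δ)) / ((δ + 1) * A + 1), by omega, by omega, Nat.div_mul_le_self _ _,
    mul_finrank_box_two_lt hP ?_⟩
  rw [mul_comm (_ + 1)]
  exact Nat.lt_mul_div_succ _ (Nat.succ_pos _)

lemma mul_le_of_mul_le {D P P' κ L : ℝ} (hD : 1 ≤ D) (hP : 0 ≤ P) (hlarge : 8 * D ^ 2 ≤ P')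
    (hκ : P' ≤ D * (κ + 1)) (hL : L * (D * (κ - (D - 1)) + 1) ≤ (D - 1) * (P * κ)) :
    P' * L ≤ P * P' - P * P' / D + 8 / 7 * D ^ 2 * P := by
  set Y := D * (κ - (D - 1)) + 1 with hY
  have hYP' : P' ≤ 8 / 7 * Y := by nlinarith
  have hP' : 0 < P' := by nlinarith
  have hYpos : 0 < Y := by linarith
  have hDκ : D * κ = Y + (D * (D - 1) - 1) := by rw [hY]; ring
  have herror : (1 - 1 / D) * (D * (D - 1) - 1) ≤ D ^ 2 := by
    rw [one_sub_div (by positivity), div_mul_eq_mul_div, div_le_iff₀ (by positivity)]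
    nlinarith [sq_nonneg D]
  refine le_of_mul_le_mul_right ?_ hYpos
  calc P' * L * Y ≤ P' * ((D - 1) * (P * κ)) := by rw [mul_assoc]; gcongr
    _ = P * P' * (1 - 1 / D) * (D * κ) := by field_simp
    _ = (P * P' - P * P' / D) * Y + P * P' * ((1 - 1 / D) * (D * (D - 1) - 1)) := by
      rw [hDκ]; ring
    _ ≤ (P * P' - P * P' / D) * Y + P * P' * D ^ 2 := by gcongr
    _ ≤ (P * P' - P * P' / D) * Y + P * (8 / 7 * Y) * D ^ 2 := by
      gcongr
    _ = (P * P' - P * P' / D + 8 / 7 * D ^ 2 * P) * Y := by ring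

lemma sq_div_le_of_card_le {D T S P P' κ L H : ℝ} (hD : 1 ≤ D) (hDT : D ≤ T) (hT : 4 ≤ T)
    (hS : 2 * T ^ 3 ≤ S) (hPP' : P * P' = S ^ 2) (hP : 0 < P) (hPS : P ≤ S)
    (hP' : 2 * P' ≤ T * S) (hκ : D * κ ≤ P') (hκ' : P' ≤ D * (κ + 1))
    (hL : L * (D * (κ - (D - 1)) + 1) ≤ (D - 1) * (P * κ))
    (hcard : S ^ 2 - T ≤ H + (κ + P' * (L + (D - 1)))) :
    S ^ 2 / T ≤ H + 2 * T ^ 2 * S - T := by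
  have hTS : 8 * T ^ 2 ≤ S := by nlinarith
  have hSpos : 0 < S := by nlinarith
  have hSP' : S ≤ P' := le_of_mul_le_mul_left (by nlinarith) hP
  have hlarge : 8 * D ^ 2 ≤ P' := by nlinarith
  have hLP' := mul_le_of_mul_le hD hP.le hlarge hκ' hL
  rw [hPP'] at hLP'
  have hκP' : κ ≤ P' := by
    by_cases hκ0 : 0 ≤ κ <;> nlinarith
  have hDP' : 2 * (D * P') ≤ T ^ 2 * S := by nlinarith
  have hDP : D ^ 2 * P ≤ T ^ 2 * S := by gcongr
  have hTTS : 4 * T ≤ T ^ 2 * S / 16 := by nlinarith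
  calc S ^ 2 / T ≤ S ^ 2 / D := by gcongr
    _ ≤ H + T + D * P' + 8 / 7 * (D ^ 2 * P) := by linarith
    _ ≤ H + 2 * T ^ 2 * S - T := by linarith

lemma exists_card_eq_pow_mul_pow (K : Type*) [Field K] [Fintype K] (p : ℕ) [CharP K p] :
    ∃ u v, Fintype.card K = p ^ u * p ^ v ∧ p ^ u ≤ p ^ v ∧ p ^ v ≤ p * p ^ u := by
  obtain ⟨N, hp, hN⟩ := FiniteField.card K p
  generalize (N : ℕ) = n at hN
  refine ⟨n / 2, n - n / 2, ?_, Nat.pow_le_pow_right hp.pos (by omega), ?_⟩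
  · rw [hN, ← pow_add, Nat.add_sub_cancel' (Nat.div_le_self _ _)]
  · rw [← pow_succ']
    exact Nat.pow_le_pow_right hp.pos (by omega)

theorem card_div_le_card_filter_add [Fintype K] [DecidableEq K] {p : ℕ} [CharP K p]
    {f : K[X][X]} (hf : f.Monic) (hfw : f ∈ weightLE K 2 (2 * f.natDegree)) {T : ℕ}
    (hfT : f.natDegree ≤ T) (hT : 4 ≤ T) (hpT : 2 * p ≤ T) (hTK : 2 * T ^ 3 ≤ √(Fintype.card K))
    {s₀ y₀ : K} (hroot : f.evalEval s₀ y₀ = 0) (hsimple : (derivative f).evalEval s₀ y₀ ≠ 0)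
    {G : Finset K} (hG : Fintype.card K ≤ G.card + T)
    (hsep : ∀ s ∈ G, (f.map (evalRingHom s)).Separable) :
    (Fintype.card K / T : ℝ) ≤
      ({s ∈ G | ∃ y, f.evalEval s y = 0}.card : ℝ) + 2 * T ^ 2 * √(Fintype.card K) - T := by
  have hp : p.Prime := CharP.char_is_prime K p
  have : ExpChar K p := ExpChar.prime hp
  obtain ⟨D, hD, hDf, hbound⟩ := exists_card_le_card_filter_add (p := p) hf hfw hroot hsimple hsep
  obtain ⟨δ, rfl⟩ : ∃ δ, D = δ + 1 := ⟨D - 1, by omega⟩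
  obtain ⟨u, v, hcard, hPP', hP'P⟩ := exists_card_eq_pow_mul_pow K p
  have hP : 0 < p ^ u := pow_pos hp.pos u
  replace hbound := hbound u v
  generalize p ^ u = P, p ^ v = P' at *
  have hsq : (P * P' : ℝ) = √(Fintype.card K) ^ 2 := by
    rw [Real.sq_sqrt (Nat.cast_nonneg _), hcard, Nat.cast_mul]
  have hcardS : (Fintype.card K : ℝ) = √(Fintype.card K) ^ 2 :=
    (Real.sq_sqrt (Nat.cast_nonneg _)).symm
  rify at hT hpT hG hPP' hP'P
  set S := √(Fintype.card K)
  have hS : 0 ≤ S := Real.sqrt_nonneg _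
  have hPR : (0 : ℝ) < P := by exact_mod_cast hP
  have hPS : (P : ℝ) ≤ S := by nlinarith
  have hSP' : S ≤ P' := by nlinarith
  have hDT : (δ + 1 : ℝ) ≤ T := by exact_mod_cast hDf.trans hfT
  have hlarge : (δ + 1) ^ 2 < P' := by
    rify
    calc (δ + 1 : ℝ) ^ 2 ≤ (T : ℝ) ^ 2 := by gcongr
      _ < 2 * (T : ℝ) ^ 3 := by nlinarith
      _ ≤ (P' : ℝ) := hTK.trans hSP'
  obtain ⟨A, L, hκ, hκ', hL, hdim⟩ := exists_mul_finrank_box_two_lt (K := K) hP hlarge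
  have hcardG := hbound (A + δ) (L + δ) hcard hκ hdim
  rify at hκ hκ' hL hcardG
  rw [hcardS]
  exact sq_div_le_of_card_le (D := δ + 1) (κ := A + δ) (L := L)
    (by simp) hDT hT hTK hsq hPR hPS (by nlinarith) hκ.le hκ'
    (by simpa using hL) (by simp only [add_sub_cancel_right]; linarith)

/-- Counts points of the curve `R = 0` off the component `U = 0`: the factor `R / U` inherits all
hypotheses, and its points on separable fibres avoid `U = 0`. -/
theorem card_div_le_card_filter_of_dvd_add [Fintype K] [DecidableEq K] {p : ℕ} [CharP K p]
    {R U : K[X][X]} (hU : U.Monic) (hUR : U ∣ R) (hR : R.Monic)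
    (hRw : R ∈ weightLE K 2 (2 * R.natDegree)) {T : ℕ} (hRT : R.natDegree ≤ T) (hT : 4 ≤ T)
    (hpT : 2 * p ≤ T) (hTK : 2 * T ^ 3 ≤ √(Fintype.card K)) {s₀ y₀ : K}
    (hroot : R.evalEval s₀ y₀ = 0) (hsimple : (derivative R).evalEval s₀ y₀ ≠ 0)
    (hU₀ : U.evalEval s₀ y₀ ≠ 0) {G : Finset K} (hG : Fintype.card K ≤ G.card + T)
    (hsep : ∀ s ∈ G, (R.map (evalRingHom s)).Separable) :
    (Fintype.card K / T : ℝ) ≤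
      ({s ∈ G | ∃ y, R.evalEval s y = 0 ∧ U.evalEval s y ≠ 0}.card : ℝ) +
        2 * T ^ 2 * √(Fintype.card K) - T := by
  obtain ⟨f, rfl⟩ := hUR
  have hf : f.Monic := hU.of_mul_monic_left hR
  have hfdvd : f ∣ U * f := dvd_mul_left f U
  have hfroot : f.evalEval s₀ y₀ = 0 :=
    (mul_eq_zero.1 (evalEval_mul s₀ y₀ U f ▸ hroot)).resolve_left hU₀
  have hfsimple : (derivative f).evalEval s₀ y₀ ≠ 0 := by
    rw [derivative_mul, evalEval_add, evalEval_mul, evalEval_mul, hfroot, mul_zero, zero_add]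
      at hsimple
    exact right_ne_zero_of_mul hsimple
  refine (card_div_le_card_filter_add hf (mem_weightLE_of_dvd hf hR hRw hfdvd)
    ((natDegree_le_of_dvd hfdvd hR.ne_zero).trans hRT) hT hpT hTK hfroot hfsimple hG fun s hs =>
      (hsep s hs).of_dvd (Polynomial.map_dvd _ hfdvd)).trans ?_
  gcongr ((?_ : ℕ) : ℝ) + _ - _
  refine Finset.card_le_card (Finset.monotone_filter_right _ fun s hs => ?_)
  rintro ⟨y, hy⟩
  refine ⟨y, by rw [evalEval_mul, hy, mul_zero], fun hUy => ?_⟩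
  have hcoprime := hsep s hs
  rw [Polynomial.map_mul] at hcoprime
  obtain ⟨b, c, hbc⟩ := hcoprime.isCoprime
  simpa [map_evalRingHom_eval, hUy, hy] using congrArg (eval y) hbc

end Bound

section Fatness

lemma one_lt_finrank_iff_exists_mul_mem {F K : Type*} [Field F] [Field K] [Algebra F K]
    [FiniteDimensional F K] {W : Submodule F K} {x : K} (hx : x ∈ W) (hx0 : x ≠ 0) :
    1 < Module.finrank F W ↔ ∃ u ∉ Set.range (algebraMap F K), u * x ∈ W := by
  have hxW : (⟨x, hx⟩ : W) ≠ 0 := fun h => hx0 (congrArg Subtype.val h)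
  have hpos : 0 < Module.finrank F W := Module.finrank_pos_iff_exists_ne_zero.2 ⟨_, hxW⟩
  have hone : 1 < Module.finrank F W ↔ ¬ Module.finrank F W = 1 := by omega
  have hscalar (y : K) : (∃ c : F, c • x = y) ↔ y / x ∈ Set.range (algebraMap F K) := by
    simp only [Algebra.smul_def, Set.mem_range, eq_div_iff hx0]
  rw [hone, finrank_eq_one_iff_of_nonzero' _ hxW]
  simp only [Subtype.forall, Subtype.ext_iff, Submodule.coe_smul, hscalar]
  push Not
  constructor
  · rintro ⟨y, hy, hyx⟩
    exact ⟨y / x, hyx, (div_mul_cancel₀ y hx0).symm ▸ hy⟩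
  · rintro ⟨u, hu, hux⟩
    exact ⟨u * x, hux, (mul_div_cancel_right₀ u hx0).symm ▸ hu⟩

variable {F K : Type*} [Field F] [Fintype F] [Field K] [Algebra F K] {a : ℕ → K} {k t : ℕ}

/-- The `q`-polynomial `∑ a_j x ^ q ^ j`, where `j ≤ k` and `q = #F`, as an `F`-linear map. -/
noncomputable def linearized (F : Type*) [Field F] [Fintype F] [Algebra F K] (a : ℕ → K) (k : ℕ) :
    K →ₗ[F] K :=
  ∑ j ∈ Finset.range (k + 1), a j • (FiniteField.frobeniusAlgHom F K ^ j).toLinearMap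

lemma linearized_apply (x : K) :
    linearized F a k x = ∑ j ∈ Finset.range (k + 1), a j * x ^ Fintype.card F ^ j := by
  simp [linearized, FiniteField.coe_frobeniusAlgHom, pow_iterate]

/-- The kernel of `f(x) - m x ^ q ^ t`; its dimension is the weight of `m` with respect to `f`. -/
noncomputable def weightSpace (f : K →ₗ[F] K) (t : ℕ) (m : K) : Submodule F K :=
  LinearMap.ker (f - m • (FiniteField.frobeniusAlgHom F K ^ t).toLinearMap)

lemma mem_weightSpace {f : K →ₗ[F] K} {m x : K} :
    x ∈ weightSpace f t m ↔ f x = m * x ^ Fintype.card F ^ t := by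
  simp [weightSpace, sub_eq_zero, FiniteField.coe_frobeniusAlgHom, pow_iterate]

/-- The elements of weight greater than one; `f` is `r`-fat of index `t` when there are `r`. -/
def fatDirections (f : K →ₗ[F] K) (t : ℕ) : Set K :=
  {m | 1 < Module.finrank F (weightSpace f t m)}

/-- The nonzero elements of the weight spaces of fat directions, see `mem_fatPoints_iff`. The
dilation factor `u` is what the curves below parametrize. -/
def fatPoints (f : K →ₗ[F] K) (t : ℕ) : Set K :=
  {x | x ≠ 0 ∧ ∃ u ∉ Set.range (algebraMap F K), f (u * x) = u ^ Fintype.card F ^ t * f x}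

lemma mem_fatPoints_iff [FiniteDimensional F K] {f : K →ₗ[F] K} {x : K} :
    x ∈ fatPoints f t ↔ x ≠ 0 ∧ ∃ m ∈ fatDirections f t, x ∈ weightSpace f t m := by
  refine and_congr_right fun hx0 => ⟨?_, ?_⟩
  · rintro ⟨u, hu, hux⟩
    have hx : x ∈ weightSpace f t (f x / x ^ Fintype.card F ^ t) :=
      mem_weightSpace.2 (div_mul_cancel₀ _ (pow_ne_zero _ hx0)).symm
    refine ⟨_, (one_lt_finrank_iff_exists_mul_mem hx hx0).2 ⟨u, hu, mem_weightSpace.2 ?_⟩, hx⟩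
    rw [hux, mul_pow, mul_left_comm, ← mem_weightSpace.1 hx]
  · rintro ⟨m, hm, hx⟩
    obtain ⟨u, hu, hux⟩ := (one_lt_finrank_iff_exists_mul_mem hx hx0).1 hm
    refine ⟨u, hu, ?_⟩
    rw [mem_weightSpace.1 hux, mem_weightSpace.1 hx, mul_pow, mul_left_comm]

lemma ncard_weightSpace_linearized_le (ha : a 0 ≠ 0) (ht : 0 < t) (m : K) :
    (weightSpace (linearized F a k) t m : Set K).ncard ≤ Fintype.card F ^ max k t := by
  classical
  have hq : 1 < Fintype.card F := Fintype.one_lt_card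
  set q := Fintype.card F
  let g : K[X] := ∑ j ∈ Finset.range (k + 1), C (a j) * X ^ q ^ j - C m * X ^ q ^ t
  have hterm {i : ℕ} (c : K) (hi : i ≤ max k t) : (C c * X ^ q ^ i).natDegree ≤ q ^ max k t :=
    (natDegree_C_mul_X_pow_le _ _).trans (Nat.pow_le_pow_right hq.le hi)
  have hdeg : g.natDegree ≤ q ^ max k t := by
    refine natDegree_sub_le_of_le (natDegree_sum_le_of_forall_le _ _ fun j hj => hterm _ ?_)
      (hterm _ (le_max_right k t)) |>.trans (max_self _).le
    exact (Finset.mem_range_succ_iff.1 hj).trans (le_max_left k t)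
  have hg : g ≠ 0 := fun h => ha <| by
    simpa [g, coeff_X_pow, hq.ne', ht.ne', eq_comm (a := 1)] using congrArg (coeff · 1) h
  have hsub : (weightSpace (linearized F a k) t m : Set K) ⊆ g.roots.toFinset := fun x hx => by
    simpa [g, hg, eval_finsetSum, sub_eq_zero, linearized_apply] using mem_weightSpace.1 hx
  calc _ ≤ g.roots.toFinset.card := by
        rw [← Set.ncard_coe_finset]
        exact Set.ncard_le_ncard hsub (Finset.finite_toSet _)
    _ ≤ g.natDegree := (Multiset.toFinset_card_le _).trans (card_roots' g)
    _ ≤ q ^ max k t := hdeg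

lemma two_le_max_of_mem_fatDirections [FiniteDimensional F K] (ha : a 0 ≠ 0) (ht : 0 < t) {m : K}
    (hm : m ∈ fatDirections (linearized F a k) t) : 2 ≤ max k t := by
  have hcard := ncard_weightSpace_linearized_le (F := F) (k := k) ha ht m
  rw [← Nat.card_coe_set_eq, SetLike.coe_sort_coe, Module.natCard_eq_pow_finrank (K := F),
    Nat.card_eq_fintype_card, Nat.pow_le_pow_iff_right Fintype.one_lt_card] at hcard
  exact Nat.le_trans hm hcard

lemma fatPoints_nonempty [FiniteDimensional F K] {f : K →ₗ[F] K}
    (hf : (fatDirections f t).Nonempty) : (fatPoints f t).Nonempty := by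
  obtain ⟨m, hm⟩ := hf
  have : Nontrivial (weightSpace f t m) := Module.nontrivial_of_finrank_pos (zero_lt_one.trans hm)
  obtain ⟨x, hx⟩ := exists_ne (0 : weightSpace f t m)
  exact ⟨x, mem_fatPoints_iff.2 ⟨Subtype.coe_ne_coe.2 hx, m, hm, x.2⟩⟩

lemma ncard_fatPoints_le [Finite K] (ha : a 0 ≠ 0) (ht : 0 < t) :
    (fatPoints (linearized F a k) t).ncard ≤
      (Fintype.card F ^ max k t - 1) * (fatDirections (linearized F a k) t).ncard := by
  classical
  have hdir (x) (hx : x ∈ fatPoints (linearized F a k) t) := (mem_fatPoints_iff.1 hx).2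
  choose! m hm hxm using hdir
  rw [Set.ncard_eq_toFinset_card _ (Set.toFinite _), Set.ncard_eq_toFinset_card _ (Set.toFinite _)]
  refine Finset.card_le_mul_card_image_of_maps_to (f := m) (fun x hx => ?_) _
    fun b _ => Nat.le_sub_one_of_lt ?_
  · simpa using hm x ((Set.Finite.mem_toFinset _).1 hx)
  refine lt_of_lt_of_le ?_ (ncard_weightSpace_linearized_le (F := F) (k := k) ha ht b)
  rw [← Set.ncard_coe_finset]
  refine Set.ncard_lt_ncard ⟨fun x hx => ?_, fun h => ?_⟩ (Set.toFinite _)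
  · obtain ⟨hxH, rfl⟩ := Finset.mem_filter.1 hx
    exact hxm x ((Set.Finite.mem_toFinset _).1 hxH)
  · have hzero := (Finset.mem_filter.1 (h (zero_mem _))).1
    exact ((Set.Finite.mem_toFinset _).1 hzero).1 rfl

end Fatness

section DilationCurves

variable {K : Type*} [Field K] {q k t : ℕ} {a : ℕ → K}

/-- For `t < k`, a monic form of the curve whose points over `s = x⁻¹` are the `y` such that
`f (y x) = y ^ q ^ t f x`, where `f` is the `q`-polynomial with coefficients `a`; see
`evalEval_dilationCurve`. -/
noncomputable def dilationCurve (q : ℕ) (a : ℕ → K) (k t : ℕ) : K[X][X] :=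
  ∑ j ∈ Finset.range (k + 1),
    C (C (a j / a k) * X ^ (q ^ k - q ^ j)) * (X ^ q ^ j - X ^ q ^ t)

/-- For `k ≤ t`, a monic form of the curve whose points over `s = x` are the `y` such that
`f (y⁻¹ x) = y⁻¹ ^ q ^ t f x`, where `f` is the `q`-polynomial with coefficients `a`; see
`evalEval_invDilationCurve`. -/
noncomputable def invDilationCurve (q : ℕ) (a : ℕ → K) (k t : ℕ) : K[X][X] :=
  ∑ j ∈ Finset.range (k + 1),
    C (C (a j / a 0) * X ^ (q ^ j - 1)) * (X ^ (q ^ t - q ^ j) - 1)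

lemma natDegree_dilationCurve_le (hq : 0 < q) (htk : t ≤ k) :
    (dilationCurve q a k t).natDegree ≤ q ^ k := by
  refine natDegree_sum_le_of_forall_le _ _ fun j hj => (natDegree_C_mul_le _ _).trans ?_
  have hpow {i : ℕ} (hi : i ≤ k) : (X ^ q ^ i : K[X][X]).natDegree ≤ q ^ k :=
    (natDegree_X_pow _).trans_le (Nat.pow_le_pow_right hq hi)
  exact (natDegree_sub_le_of_le (hpow (Finset.mem_range_succ_iff.1 hj)) (hpow htk)).trans
    (max_self _).le

lemma coeff_dilationCurve (hq : 1 < q) (ha : a k ≠ 0) (htk : t < k) :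
    (dilationCurve q a k t).coeff (q ^ k) = 1 := by
  simp [dilationCurve, finsetSum_coeff, coeff_X_pow, (Nat.pow_right_injective hq).eq_iff, htk.ne',
    ha, -map_mul]

lemma dilationCurve_monic (hq : 1 < q) (ha : a k ≠ 0) (htk : t < k) :
    (dilationCurve q a k t).Monic :=
  monic_of_natDegree_le_of_coeff_eq_one _ (natDegree_dilationCurve_le (by omega) htk.le)
    (coeff_dilationCurve hq ha htk)

lemma natDegree_dilationCurve (hq : 1 < q) (ha : a k ≠ 0) (htk : t < k) :
    (dilationCurve q a k t).natDegree = q ^ k :=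
  natDegree_eq_of_le_of_coeff_ne_zero (natDegree_dilationCurve_le (by omega) htk.le)
    (coeff_dilationCurve hq ha htk ▸ one_ne_zero)

lemma dilationCurve_mem_weightLE (hq : 1 < q) (htk : t < k) :
    dilationCurve q a k t ∈ weightLE K 2 (2 * q ^ k) := by
  refine sum_mem fun j hj => ?_
  have hjk : q ^ j ≤ q ^ k := Nat.pow_le_pow_right (by omega) (Finset.mem_range_succ_iff.1 hj)
  have htk : q ^ t * 2 ≤ q ^ k :=
    (Nat.mul_le_mul_left _ hq).trans ((pow_succ q t).symm.trans_le
      (Nat.pow_le_pow_right (by omega) htk))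
  have hdeg := natDegree_C_mul_X_pow_le (a j / a k) (q ^ k - q ^ j)
  rw [mul_sub]
  exact sub_mem (C_mul_X_pow_mem_weightLE (by omega)) (C_mul_X_pow_mem_weightLE (by omega))

lemma X_pow_sub_X_dvd_dilationCurve : X ^ q - X ∣ dilationCurve q a k t := by
  refine Finset.dvd_sum fun j _ => Dvd.dvd.mul_left ?_ _
  have hX (i : ℕ) : (X ^ q - X : K[X][X]) ∣ X ^ q ^ i - X := by
    simpa using dvd_pow_pow_sub_self_of_dvd (r := (X : K[X][X])) (p := q) (one_dvd i)
  simpa using dvd_sub (hX j) (hX t)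

lemma derivative_dilationCurve (hq : (q : K) = 0) (ht : 0 < t) :
    derivative (dilationCurve q a k t) = C (C (a 0 / a k) * X ^ (q ^ k - 1)) := by
  have hX {j : ℕ} (hj : j ≠ 0) : derivative (X ^ q ^ j : K[X][X]) = 0 := by
    have hqj : ((q ^ j : ℕ) : K[X]) = 0 := by
      rw [Nat.cast_pow, ← map_natCast C, hq, map_zero, zero_pow hj]
    rw [derivative_X_pow, hqj, C_0, zero_mul]
  rw [dilationCurve, derivative_sum, Finset.sum_eq_single_of_mem 0 (by simp)]
  · rw [derivative_C_mul, derivative_sub, hX ht.ne', pow_zero, pow_one, derivative_X, sub_zero,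
      mul_one]
  · intro j _ hj
    rw [derivative_C_mul, derivative_sub, hX hj, hX ht.ne', sub_zero, mul_zero]

lemma evalEval_dilationCurve (hq : 0 < q) (ha : a k ≠ 0) {x : K} (hx : x ≠ 0) (y : K) :
    (dilationCurve q a k t).evalEval x⁻¹ y * (a k * x ^ q ^ k) =
      ∑ j ∈ Finset.range (k + 1), a j * (y * x) ^ q ^ j -
        y ^ q ^ t * ∑ j ∈ Finset.range (k + 1), a j * x ^ q ^ j := by
  rw [dilationCurve, evalEval_finsetSum, Finset.sum_mul, Finset.mul_sum, ← Finset.sum_sub_distrib]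
  refine Finset.sum_congr rfl fun j hj => ?_
  have hjk : q ^ j ≤ q ^ k := Nat.pow_le_pow_right hq (Finset.mem_range_succ_iff.1 hj)
  have hpow : x ^ q ^ k = x ^ (q ^ k - q ^ j) * x ^ q ^ j := by
    rw [← pow_add, Nat.sub_add_cancel hjk]
  simp only [evalEval_mul, evalEval_sub, evalEval_pow, evalEval_C, evalEval_X, eval_mul, eval_pow,
    eval_C, eval_X, hpow, inv_pow, mul_pow]
  field_simp

lemma natDegree_invDilationCurve_le (hq : 0 < q) :
    (invDilationCurve q a k t).natDegree ≤ q ^ t - 1 := by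
  refine natDegree_sum_le_of_forall_le _ _ fun j _ => (natDegree_C_mul_le _ _).trans ?_
  rw [← C_1, natDegree_X_pow_sub_C]
  exact Nat.sub_le_sub_left (Nat.one_le_pow _ _ hq) _

lemma coeff_invDilationCurve (hq : 1 < q) (ha : a 0 ≠ 0) (ht : 0 < t) (hkt : k ≤ t) :
    (invDilationCurve q a k t).coeff (q ^ t - 1) = 1 := by
  have hqt : 1 < q ^ t := Nat.one_lt_pow ht.ne' hq
  rw [invDilationCurve, finsetSum_coeff, Finset.sum_eq_single_of_mem 0 (by simp)]
  · simp [coeff_X_pow, coeff_one, ha, (Nat.sub_pos_of_lt hqt).ne', -map_mul]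
  · intro j hj hj0
    have hjt : q ^ j ≤ q ^ t :=
      Nat.pow_le_pow_right (by omega) ((Finset.mem_range_succ_iff.1 hj).trans hkt)
    have hjone : 1 < q ^ j := Nat.one_lt_pow hj0 hq
    rw [coeff_C_mul, coeff_sub, coeff_X_pow, coeff_one, if_neg (by omega), if_neg (by omega),
      sub_zero, mul_zero]

lemma invDilationCurve_monic (hq : 1 < q) (ha : a 0 ≠ 0) (ht : 0 < t) (hkt : k ≤ t) :
    (invDilationCurve q a k t).Monic :=
  monic_of_natDegree_le_of_coeff_eq_one _ (natDegree_invDilationCurve_le (by omega))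
    (coeff_invDilationCurve hq ha ht hkt)

lemma natDegree_invDilationCurve (hq : 1 < q) (ha : a 0 ≠ 0) (ht : 0 < t) (hkt : k ≤ t) :
    (invDilationCurve q a k t).natDegree = q ^ t - 1 :=
  natDegree_eq_of_le_of_coeff_ne_zero (natDegree_invDilationCurve_le (by omega))
    (coeff_invDilationCurve hq ha ht hkt ▸ one_ne_zero)

lemma invDilationCurve_mem_weightLE (hq : 0 < q) (hkt : k ≤ t) :
    invDilationCurve q a k t ∈ weightLE K 2 (2 * (q ^ t - 1)) := by
  refine sum_mem fun j hj => ?_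
  have hjt : q ^ j ≤ q ^ t :=
    Nat.pow_le_pow_right hq ((Finset.mem_range_succ_iff.1 hj).trans hkt)
  have hj : 1 ≤ q ^ j := Nat.one_le_pow _ _ hq
  have hdeg := natDegree_C_mul_X_pow_le (a j / a 0) (q ^ j - 1)
  rw [mul_sub, ← pow_zero X]
  exact sub_mem (C_mul_X_pow_mem_weightLE (by omega)) (C_mul_X_pow_mem_weightLE (by omega))

lemma X_pow_sub_one_dvd_invDilationCurve (hkt : k ≤ t) :
    X ^ (q - 1) - 1 ∣ invDilationCurve q a k t := by
  refine Finset.dvd_sum fun j hj => Dvd.dvd.mul_left ?_ _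
  have hjt : j ≤ t := (Finset.mem_range_succ_iff.1 hj).trans hkt
  have hdvd : q - 1 ∣ q ^ t - q ^ j := by
    rw [← Nat.sub_add_cancel hjt, pow_add, ← Nat.sub_one_mul]
    exact Dvd.dvd.mul_right (by simpa using Nat.sub_dvd_pow_sub_pow q 1 (t - j)) _
  obtain ⟨m, hm⟩ := hdvd
  exact hm ▸ pow_one_sub_dvd_pow_mul_sub_one X (q - 1) m

lemma evalEval_invDilationCurve (hq : 0 < q) (ha : a 0 ≠ 0) (hkt : k ≤ t) (x : K) {y : K}
    (hy : y ≠ 0) : (invDilationCurve q a k t).evalEval x y * (a 0 * x) =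
      y ^ q ^ t * ∑ j ∈ Finset.range (k + 1), a j * (y⁻¹ * x) ^ q ^ j -
        ∑ j ∈ Finset.range (k + 1), a j * x ^ q ^ j := by
  rw [invDilationCurve, evalEval_finsetSum, Finset.sum_mul, Finset.mul_sum,
    ← Finset.sum_sub_distrib]
  refine Finset.sum_congr rfl fun j hj => ?_
  have hjt : q ^ j ≤ q ^ t :=
    Nat.pow_le_pow_right hq ((Finset.mem_range_succ_iff.1 hj).trans hkt)
  have hypow : y ^ q ^ t = y ^ (q ^ t - q ^ j) * y ^ q ^ j := by
    rw [← pow_add, Nat.sub_add_cancel hjt]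
  have hxpow : x ^ q ^ j = x ^ (q ^ j - 1) * x := by
    rw [← pow_succ, Nat.sub_add_cancel (Nat.one_le_pow _ _ hq)]
  simp only [evalEval_mul, evalEval_sub, evalEval_pow, evalEval_C, evalEval_X, evalEval_one,
    eval_mul, eval_pow, eval_C, eval_X, hypow, mul_pow, inv_pow, hxpow]
  field_simp

lemma derivative_invDilationCurve (hq : (q : K) = 0) (hq0 : 0 < q) (ha : a 0 ≠ 0) (ht : 0 < t)
    (hkt : k ≤ t) : derivative (invDilationCurve q a k t) = -X ^ (q ^ t - 2) := by
  have hcast {j : ℕ} (hj : j ≠ 0) : ((q ^ j : ℕ) : K[X]) = 0 := by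
    rw [Nat.cast_pow, ← map_natCast C, hq, map_zero, zero_pow hj]
  have hpow {j : ℕ} (hjt : j ≤ t) : derivative (X ^ (q ^ t - q ^ j) - 1 : K[X][X]) =
      -(C ((q ^ j : ℕ) : K[X]) * X ^ (q ^ t - q ^ j - 1)) := by
    rw [derivative_sub, derivative_X_pow, Nat.cast_sub (Nat.pow_le_pow_right hq0 hjt),
      hcast ht.ne', derivative_one, sub_zero, zero_sub, C_neg, neg_mul]
  rw [invDilationCurve, derivative_sum, Finset.sum_eq_single_of_mem 0 (by simp)]
  · rw [derivative_C_mul, hpow (Nat.zero_le t)]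
    simp [ha, Nat.sub_sub]
  · intro j hj hj0
    rw [derivative_C_mul, hpow ((Finset.mem_range_succ_iff.1 hj).trans hkt), hcast hj0]
    simp

lemma natDegree_eval_zero_invDilationCurve_le (hq : 0 < q) (hkt : k ≤ t) :
    ((invDilationCurve q a k t).eval 0).natDegree ≤ q ^ t - 1 := by
  rw [invDilationCurve, eval_finsetSum]
  refine natDegree_sum_le_of_forall_le _ _ fun j hj => ?_
  have hjt : q ^ j ≤ q ^ t := Nat.pow_le_pow_right hq ((Finset.mem_range_succ_iff.1 hj).trans hkt)
  have hconst : ((0 : K[X]) ^ (q ^ t - q ^ j) - 1).natDegree = 0 := by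
    rw [zero_pow_eq]
    split_ifs <;> simp
  have hterm := natDegree_C_mul_X_pow_le (a j / a 0) (q ^ j - 1)
  rw [eval_mul, eval_C, eval_sub, eval_pow, eval_X, eval_one]
  exact natDegree_mul_le.trans (by omega)

lemma evalEval_zero_zero_invDilationCurve (hq : 1 < q) (ha : a 0 ≠ 0) (ht : 0 < t) :
    (invDilationCurve q a k t).evalEval 0 0 = -1 := by
  have hpos {j : ℕ} (hj : j ≠ 0) : q ^ j - 1 ≠ 0 := (Nat.sub_pos_of_lt (Nat.one_lt_pow hj hq)).ne'
  rw [invDilationCurve, evalEval_finsetSum, Finset.sum_eq_single_of_mem 0 (by simp)]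
  · simp [evalEval, ha, hpos ht.ne']
  · intro j _ hj
    simp [evalEval, hpos hj]

lemma card_le_card_filter_invDilationCurve_add [Fintype K] [DecidableEq K] (hq : 1 < q)
    (ha : a 0 ≠ 0) (ht : 0 < t) (hkt : k ≤ t) :
    Fintype.card K ≤
      {s : K | s ≠ 0 ∧ (invDilationCurve q a k t).evalEval s 0 ≠ 0}.toFinset.card + q ^ t := by
  set g := (invDilationCurve q a k t).eval 0 with hg
  have hg0 : g ≠ 0 := fun h => by
    have := evalEval_zero_zero_invDilationCurve (k := k) hq ha ht
    simp [evalEval, ← hg, h] at this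
  have hset : {s : K | s ≠ 0 ∧ (invDilationCurve q a k t).evalEval s 0 ≠ 0}.toFinset =
      (insert 0 g.roots.toFinset)ᶜ := by
    ext s
    simp [hg0, evalEval, ← hg]
  have hroots := (Multiset.toFinset_card_le _).trans (card_roots' g)
  have hdeg : g.natDegree ≤ q ^ t - 1 := natDegree_eval_zero_invDilationCurve_le hq.le hkt
  have hinsert := Finset.card_insert_le 0 g.roots.toFinset
  have hqt : 0 < q ^ t := by positivity
  rw [hset, Finset.card_compl]
  omega

end DilationCurves

section Counting

variable {F K : Type*} [Field F] [Fintype F] [Field K] [Algebra F K] {a : ℕ → K} {k t : ℕ}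

lemma cast_card_eq_zero (F K : Type*) [Field F] [Fintype F] [Field K] [Algebra F K] :
    (Fintype.card F : K) = 0 := by
  rw [← map_natCast (algebraMap F K), FiniteField.cast_card_eq_zero, map_zero]

lemma mem_range_algebraMap_iff_pow_card_eq {u : K} :
    u ∈ Set.range (algebraMap F K) ↔ u ^ Fintype.card F = u := by
  classical
  have hne := FiniteField.X_pow_card_sub_X_ne_zero K (Fintype.one_lt_card (α := F))
  have hroots : (X ^ Fintype.card F - X : K[X]).roots = Finset.univ.val.map (algebraMap F K) := by
    have hF := FiniteField.roots_X_pow_card_sub_X F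
    have hcard : (X ^ Fintype.card F - X : F[X]).roots.card =
        (X ^ Fintype.card F - X : F[X]).natDegree := by
      rw [hF, FiniteField.X_pow_card_sub_X_natDegree_eq F Fintype.one_lt_card]
      rfl
    simpa [hF] using
      (roots_map_of_injective_of_card_eq_natDegree (algebraMap F K).injective hcard).symm
  rw [← sub_eq_zero]
  simpa [mem_roots hne, IsRoot] using (congrArg (u ∈ ·) hroots).symm

lemma mem_fatPoints_iff_exists_dilationCurve (ha : a k ≠ 0) {x : K} :
    x ∈ fatPoints (linearized F a k) t ↔ x ≠ 0 ∧ ∃ y,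
      (dilationCurve (Fintype.card F) a k t).evalEval x⁻¹ y = 0 ∧
        (X ^ Fintype.card F - X : K[X][X]).evalEval x⁻¹ y ≠ 0 := by
  refine and_congr_right fun hx => exists_congr fun y => and_comm.trans (and_congr ?_ ?_)
  · have hunit : a k * x ^ Fintype.card F ^ k ≠ 0 := mul_ne_zero ha (pow_ne_zero _ hx)
    rw [← mul_eq_zero_iff_right hunit, evalEval_dilationCurve Fintype.card_pos ha hx,
      sub_eq_zero, linearized_apply, linearized_apply]
  · rw [mem_range_algebraMap_iff_pow_card_eq, ← sub_eq_zero]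
    simp

lemma mem_fatPoints_iff_exists_invDilationCurve (ha : a 0 ≠ 0) (hkt : k ≤ t) {x : K} :
    x ∈ fatPoints (linearized F a k) t ↔ x ≠ 0 ∧ ∃ y ≠ 0,
      (invDilationCurve (Fintype.card F) a k t).evalEval x y = 0 ∧
        (X ^ (Fintype.card F - 1) - 1 : K[X][X]).evalEval x y ≠ 0 := by
  have hcurve {y : K} (hy : y ≠ 0) (hx : x ≠ 0) :
      linearized F a k (y⁻¹ * x) = y⁻¹ ^ Fintype.card F ^ t * linearized F a k x ↔
        (invDilationCurve (Fintype.card F) a k t).evalEval x y = 0 := by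
    rw [← mul_eq_zero_iff_right (mul_ne_zero ha hx),
      evalEval_invDilationCurve Fintype.card_pos ha hkt x hy, sub_eq_zero, inv_pow,
      eq_inv_mul_iff_mul_eq₀ (pow_ne_zero _ hy), linearized_apply, linearized_apply]
  have hscalar {y : K} (hy : y ≠ 0) : y⁻¹ ∈ Set.range (algebraMap F K) ↔
      (X ^ (Fintype.card F - 1) - 1 : K[X][X]).evalEval x y = 0 := by
    rw [mem_range_algebraMap_iff_pow_card_eq, inv_pow, inv_inj,
      ← Nat.sub_add_cancel (Fintype.card_pos (α := F)), pow_succ, mul_eq_right₀ hy]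
    simp [sub_eq_zero]
  refine and_congr_right fun hx => ⟨?_, ?_⟩
  · rintro ⟨u, hu, hux⟩
    have hu0 : u⁻¹ ≠ 0 := inv_ne_zero fun h => hu ⟨0, by rw [h, map_zero]⟩
    rw [← inv_inv u] at hu hux
    exact ⟨u⁻¹, hu0, (hcurve hu0 hx).1 hux, (hscalar hu0).not.1 hu⟩
  · rintro ⟨y, hy, hxy, hU⟩
    exact ⟨y⁻¹, (hscalar hy).not.2 hU, (hcurve hy hx).2 hxy⟩

lemma separable_map_dilationCurve {q : ℕ} (hq : (q : K) = 0) (ht : 0 < t) (ha₀ : a 0 ≠ 0)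
    (ha : a k ≠ 0) {s : K} (hs : s ≠ 0) :
    ((dilationCurve q a k t).map (evalRingHom s)).Separable := by
  have hunit : IsUnit (a 0 / a k * s ^ (q ^ k - 1)) :=
    (mul_ne_zero (div_ne_zero ha₀ ha) (pow_ne_zero _ hs)).isUnit
  rw [separable_def, derivative_map, derivative_dilationCurve hq ht, map_C]
  exact isCoprime_one_right.of_isCoprime_of_dvd_right
    (isUnit_iff_dvd_one.1 (by simpa using hunit.map C))

lemma separable_map_invDilationCurve {q : ℕ} (hq : (q : K) = 0) (hq0 : 0 < q) (ha : a 0 ≠ 0)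
    (ht : 0 < t) (hkt : k ≤ t) {s : K} (hs : (invDilationCurve q a k t).evalEval s 0 ≠ 0) :
    ((invDilationCurve q a k t).map (evalRingHom s)).Separable := by
  rw [separable_def, derivative_map, derivative_invDilationCurve hq hq0 ha ht hkt]
  have hX : IsCoprime X ((invDilationCurve q a k t).map (evalRingHom s)) := by
    rwa [irreducible_X.coprime_iff_not_dvd, X_dvd_iff, coeff_zero_eq_eval_zero,
      map_evalRingHom_eval]
  rw [Polynomial.map_neg, Polynomial.map_pow, map_X]
  exact hX.symm.pow_right.neg_right

lemma card_div_le_ncard_fatPoints_of_lt [Fintype K] {p : ℕ} [CharP K p] (ha : a k ≠ 0)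
    (ha₀ : a 0 ≠ 0) (ht : 0 < t) (htk : t < k) {T : ℕ} (hkT : Fintype.card F ^ k ≤ T)
    (hT : 4 ≤ T) (hpT : 2 * p ≤ T) (hTK : 2 * T ^ 3 ≤ √(Fintype.card K))
    (hf : (fatPoints (linearized F a k) t).Nonempty) :
    (Fintype.card K / T : ℝ) ≤ ((fatPoints (linearized F a k) t).ncard : ℝ) +
      2 * T ^ 2 * √(Fintype.card K) - T := by
  classical
  have hq : 1 < Fintype.card F := Fintype.one_lt_card
  have hqK : (Fintype.card F : K) = 0 := cast_card_eq_zero F K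
  have hdeg := natDegree_dilationCurve hq ha htk
  obtain ⟨x₀, hx₀⟩ := hf
  obtain ⟨hx₀0, y₀, hroot, hU₀⟩ := (mem_fatPoints_iff_exists_dilationCurve ha).1 hx₀
  have hsimple : (derivative (dilationCurve (Fintype.card F) a k t)).evalEval x₀⁻¹ y₀ ≠ 0 := by
    rw [derivative_dilationCurve hqK ht]
    simp [evalEval, ha, ha₀, hx₀0]
  have hcard : Fintype.card K ≤ ({0}ᶜ : Finset K).card + T := by
    rw [Finset.card_compl, Finset.card_singleton]
    omega
  refine (card_div_le_card_filter_of_dvd_add (monic_X_pow_sub (by rw [degree_X]; exact_mod_cast hq))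
    X_pow_sub_X_dvd_dilationCurve (dilationCurve_monic hq ha htk)
    (hdeg ▸ dilationCurve_mem_weightLE hq htk) (hdeg.trans_le hkT) hT hpT hTK hroot hsimple hU₀
    hcard fun s hs => separable_map_dilationCurve hqK ht ha₀ ha (by simpa using hs)).trans ?_
  gcongr ((?_ : ℕ) : ℝ) + _ - _
  rw [← Set.ncard_coe_finset]
  refine Set.ncard_le_ncard_of_injOn (·⁻¹) (fun s hs => ?_) inv_injective.injOn (Set.toFinite _)
  obtain ⟨hs, hy⟩ := Finset.mem_filter.1 hs
  exact (mem_fatPoints_iff_exists_dilationCurve ha).2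
    ⟨inv_ne_zero (by simpa using hs), by simpa only [inv_inv] using hy⟩

lemma card_div_le_ncard_fatPoints_of_le [Fintype K] {p : ℕ} [CharP K p] (ha₀ : a 0 ≠ 0)
    (ht : 0 < t) (hkt : k ≤ t) {T : ℕ} (htT : Fintype.card F ^ t ≤ T)
    (hT : 4 ≤ T) (hpT : 2 * p ≤ T) (hTK : 2 * T ^ 3 ≤ √(Fintype.card K))
    (hf : (fatPoints (linearized F a k) t).Nonempty) :
    (Fintype.card K / T : ℝ) ≤ ((fatPoints (linearized F a k) t).ncard : ℝ) +
      2 * T ^ 2 * √(Fintype.card K) - T := by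
  classical
  have hq : 1 < Fintype.card F := Fintype.one_lt_card
  have hqK : (Fintype.card F : K) = 0 := cast_card_eq_zero F K
  set R := invDilationCurve (Fintype.card F) a k t
  have hdeg : R.natDegree = Fintype.card F ^ t - 1 := natDegree_invDilationCurve hq ha₀ ht hkt
  have hU : (X ^ (Fintype.card F - 1) - 1 : K[X][X]).Monic :=
    monic_X_pow_sub_C 1 (Nat.sub_pos_of_lt hq).ne'
  obtain ⟨x₀, hx₀⟩ := hf
  obtain ⟨-, y₀, hy₀, hroot, hU₀⟩ := (mem_fatPoints_iff_exists_invDilationCurve ha₀ hkt).1 hx₀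
  have hsimple : (derivative R).evalEval x₀ y₀ ≠ 0 := by
    rw [derivative_invDilationCurve hqK hq.le ha₀ ht hkt]
    simp [evalEval, hy₀]
  refine (card_div_le_card_filter_of_dvd_add hU (X_pow_sub_one_dvd_invDilationCurve hkt)
    (invDilationCurve_monic hq ha₀ ht hkt) (hdeg ▸ invDilationCurve_mem_weightLE hq.le hkt)
    (hdeg.trans_le ((Nat.sub_le _ _).trans htT)) hT hpT hTK hroot hsimple hU₀
    ((card_le_card_filter_invDilationCurve_add hq ha₀ ht hkt).trans (Nat.add_le_add_left htT _))
    fun s hs => separable_map_invDilationCurve hqK hq.le ha₀ ht hkt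
      (Set.mem_toFinset.1 hs).2).trans ?_
  gcongr ((?_ : ℕ) : ℝ) + _ - _
  rw [← Set.ncard_coe_finset]
  refine Set.ncard_le_ncard (fun s hs => ?_) (Set.toFinite _)
  obtain ⟨hs, y, hy, hUy⟩ := Finset.mem_filter.1 hs
  obtain ⟨hs0, hR₀⟩ := Set.mem_toFinset.1 hs
  exact (mem_fatPoints_iff_exists_invDilationCurve ha₀ hkt).2
    ⟨hs0, y, fun hy0 => hR₀ (hy0 ▸ hy), hy, hUy⟩

end Counting

lemma sub_lt_of_div_le {d T E S r : ℝ} (hd : 2 ≤ d) (hT : 4 ≤ T) (hE : T ^ 2 ≤ E) (hS : 0 ≤ S)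
    (hr : 0 < r) (h : 2 * T ^ 3 ≤ S → S ^ 2 / T ≤ (T - 1) * r + 2 * T ^ 2 * S - T) :
    (S ^ 2 + 1) / E - 2 * (d - 1) * E / (T - 1) * S - 1 < r := by
  have hE0 : 0 < E := by nlinarith
  have hT1 : 0 < T - 1 := by linarith
  have hEinv : 1 / E < 1 := (div_lt_one hE0).2 (by nlinarith)
  have hcoeff : 2 * T ^ 2 / (T - 1) * S ≤ 2 * (d - 1) * E / (T - 1) * S := by
    gcongr <;> linarith
  suffices S ^ 2 / E - 2 * T ^ 2 / (T - 1) * S ≤ r by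
    rw [add_div]
    linarith
  rcases le_or_gt (2 * T ^ 3) S with hTS | hTS
  · calc S ^ 2 / E - 2 * T ^ 2 / (T - 1) * S
        ≤ S ^ 2 / (T * (T - 1)) - 2 * T ^ 2 / (T - 1) * S := by gcongr; nlinarith
      _ = (S ^ 2 / T - 2 * T ^ 2 * S) / (T - 1) := by field_simp
      _ ≤ r := (div_le_iff₀ hT1).2 (by linarith [h hTS])
  · have hsmall : S ^ 2 / E ≤ 2 * T ^ 2 / (T - 1) * S := by
      rw [div_mul_eq_mul_div, div_le_div_iff₀ hE0 hT1]
      calc S ^ 2 * (T - 1) ≤ 2 * T ^ 2 * S * T ^ 2 := by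
            have hST : 0 ≤ S * T ^ 3 := by positivity
            nlinarith [mul_le_mul_of_nonneg_left hTS.le hS]
        _ ≤ _ := by gcongr
    linarith

section FatDirections

variable {F K : Type*} [Field F] [Fintype F] [Field K] [Fintype K] [Algebra F K] {a : ℕ → K}
  {k t : ℕ}

lemma card_div_le_ncard_fatPoints (ha : a k ≠ 0) (ha₀ : a 0 ≠ 0) (ht : 0 < t)
    (hf : (fatDirections (linearized F a k) t).Nonempty)
    (hK : 2 * ((Fintype.card F : ℝ) ^ max k t) ^ 3 ≤ √(Fintype.card K)) :
    (Fintype.card K / (Fintype.card F : ℝ) ^ max k t) ≤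
      ((fatPoints (linearized F a k) t).ncard : ℝ) +
        2 * ((Fintype.card F : ℝ) ^ max k t) ^ 2 * √(Fintype.card K) -
          (Fintype.card F : ℝ) ^ max k t := by
  obtain ⟨p, hp⟩ := CharP.exists K
  have hd : 2 ≤ max k t := two_le_max_of_mem_fatDirections ha₀ ht hf.some_mem
  have hq : 2 ≤ Fintype.card F := Fintype.one_lt_card
  have hpq : p ≤ Fintype.card F :=
    Nat.le_of_dvd Fintype.card_pos ((CharP.cast_eq_zero_iff K p _).1 (cast_card_eq_zero F K))
  have hpow {i : ℕ} (hi : i ≤ max k t) : Fintype.card F ^ i ≤ Fintype.card F ^ max k t :=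
    Nat.pow_le_pow_right Fintype.card_pos hi
  have hT : Fintype.card F * Fintype.card F ≤ Fintype.card F ^ max k t :=
    (sq _).symm.trans_le (hpow hd)
  have hT4 : 4 ≤ Fintype.card F ^ max k t := (Nat.mul_le_mul hq hq).trans hT
  have hpT : 2 * p ≤ Fintype.card F ^ max k t := (Nat.mul_le_mul hq hpq).trans hT
  rw [← Nat.cast_pow] at hK ⊢
  rcases le_or_gt k t with hkt | htk
  · exact card_div_le_ncard_fatPoints_of_le ha₀ ht hkt (hpow (le_max_right k t)) hT4 hpT hK
      (fatPoints_nonempty hf)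
  · exact card_div_le_ncard_fatPoints_of_lt ha ha₀ ht htk (hpow (le_max_left k t)) hT4 hpT hK
      (fatPoints_nonempty hf)

theorem sub_lt_ncard_fatDirections (ha : a k ≠ 0) (ha₀ : a 0 ≠ 0) (ht : 0 < t)
    (hf : (fatDirections (linearized F a k) t).Nonempty) :
    ((Fintype.card K : ℝ) + 1) / (Fintype.card F : ℝ) ^ (max k t ^ 2) -
        2 * (((max k t : ℕ) : ℝ) - 1) * (Fintype.card F : ℝ) ^ (max k t ^ 2) /
          ((Fintype.card F : ℝ) ^ max k t - 1) * √(Fintype.card K) - 1 <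
      ((fatDirections (linearized F a k) t).ncard : ℝ) := by
  have hd : 2 ≤ max k t := two_le_max_of_mem_fatDirections ha₀ ht hf.some_mem
  have hr : 0 < (fatDirections (linearized F a k) t).ncard := (Set.ncard_pos (Set.toFinite _)).2 hf
  have hcount := card_div_le_ncard_fatPoints ha ha₀ ht hf
  have hpoints : ((fatPoints (linearized F a k) t).ncard : ℝ) ≤
      ((Fintype.card F : ℝ) ^ max k t - 1) * (fatDirections (linearized F a k) t).ncard := by
    rw [← Nat.cast_pow, ← Nat.cast_pred (Nat.pow_pos Fintype.card_pos)]
    exact_mod_cast ncard_fatPoints_le (F := F) (k := k) ha₀ ht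
  have hq : (2 : ℝ) ≤ Fintype.card F := by exact_mod_cast Fintype.one_lt_card (α := F)
  set q : ℝ := (Fintype.card F : ℝ)
  have hT : 4 ≤ q ^ max k t :=
    calc (4 : ℝ) ≤ q ^ 2 := by nlinarith
      _ ≤ q ^ max k t := pow_le_pow_right₀ (by linarith) hd
  have hE : (q ^ max k t) ^ 2 ≤ q ^ (max k t ^ 2) := by
    rw [← pow_mul, sq (max k t)]
    exact pow_le_pow_right₀ (by linarith) (Nat.mul_le_mul_left _ hd)
  have hS := Real.sq_sqrt (Nat.cast_nonneg (α := ℝ) (Fintype.card K))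
  set S := √(Fintype.card K : ℝ)
  rw [← hS] at hcount ⊢
  exact sub_lt_of_div_le (by exact_mod_cast hd) hT hE (Real.sqrt_nonneg _) (by exact_mod_cast hr)
    fun hTK => by linarith [hcount hTK]

end FatDirections

lemma finrank_weightSpace {F K : Type*} [Field F] [Fintype F] [Field K] [Algebra F K]
    [FiniteDimensional F K] (f : K →ₗ[F] K) (t : ℕ) (m : K) :
    Module.finrank F (weightSpace f t m) =
      Nat.log (Fintype.card F) (Nat.card {x : K // f x = m * x ^ Fintype.card F ^ t}) := by
  have hcard := Module.natCard_eq_pow_finrank (K := F) (V := weightSpace f t m)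
  rw [Nat.card_eq_fintype_card (α := F)] at hcard
  rw [← Nat.log_pow (Fintype.one_lt_card (α := F)) (Module.finrank F (weightSpace f t m)), ← hcard]
  exact congrArg _ (Nat.card_congr (Equiv.subtypeEquivRight fun x => mem_weightSpace))

lemma exists_algebra_of_card_eq_pow {K : Type*} [Field K] [Fintype K] {p e n : ℕ} (hp : p.Prime)
    (he : e ≠ 0) (hcard : Fintype.card K = (p ^ e) ^ n) :
    ∃ (F : Type) (_ : Field F) (_ : Fintype F) (_ : Algebra F K), Fintype.card F = p ^ e := by
  have : Fact p.Prime := ⟨hp⟩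
  have hcardK : Fintype.card K = p ^ (e * n) := hcard.trans (pow_mul p e n).symm
  have : CharP K p := charP_of_card_eq_prime_pow hcardK
  let := ZMod.algebra K p
  let := Fintype.ofFinite (GaloisField p e)
  have hfinrank : Module.finrank (ZMod p) K = e * n := by
    have hpow := Module.natCard_eq_pow_finrank (K := ZMod p) (V := K)
    rw [Nat.card_eq_fintype_card, hcardK, Nat.card_zmod] at hpow
    exact (Nat.pow_right_injective hp.two_le hpow).symm
  obtain ⟨φ⟩ := FiniteField.nonempty_algHom_of_finrank_dvd (F := ZMod p) (K := GaloisField p e)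
    (L := K) (by rw [GaloisField.finrank p he, hfinrank]; exact dvd_mul_right e n)
  refine ⟨GaloisField p e, inferInstance, inferInstance, φ.toRingHom.toAlgebra, ?_⟩
  rw [← Nat.card_eq_fintype_card, GaloisField.card p e he]

end Stepanov

open Stepanov in
theorem stmt_5_general (p e q n k t r : ℕ) (hp : p.Prime) (he : 1 ≤ e) (hq : q = p ^ e)
    (ht : 1 ≤ t) (K : Type*) [Field K] [Fintype K] (hcard : Fintype.card K = q ^ n)
    (a : ℕ → K) (hak : a k ≠ 0) (ha0 : a 0 ≠ 0)
    (f : K → K) (hf : f = fun x => ∑ j ∈ Finset.range (k + 1), a j * x ^ q ^ j)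
    (d : ℕ) (hd : d = max k t)
    (hr : r = Nat.card {m : K // 1 < Nat.log q (Nat.card {x : K // f x = m * x ^ q ^ t})})
    (hrpos : 0 < r) :
    (r : ℝ) > ((q : ℝ) ^ n + 1) / (q : ℝ) ^ (d ^ 2)
      - (2 * ((d : ℝ) - 1) * (q : ℝ) ^ (d ^ 2) / ((q : ℝ) ^ d - 1)) *
          Real.sqrt ((q : ℝ) ^ n)
      - 1 := by
  obtain ⟨F, _, _, _, hF⟩ := exists_algebra_of_card_eq_pow hp (by omega) (hq ▸ hcard)
  obtain rfl : Fintype.card F = q := hF.trans hq.symm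
  have hfa : f = linearized F a k := hf.trans (funext fun x => (linearized_apply x).symm)
  have hfat : r = (fatDirections (linearized F a k) t).ncard := by
    rw [hr, hfa, ← Nat.card_coe_set_eq]
    simp only [fatDirections, finrank_weightSpace, Set.coe_ofPred]
  have hne : (fatDirections (linearized F a k) t).Nonempty :=
    (Set.ncard_pos (Set.toFinite _)).1 (hfat ▸ hrpos)
  have hbound := sub_lt_ncard_fatDirections hak ha0 ht hne
  rw [hcard, Nat.cast_pow, ← hfat, ← hd] at hbound
  exact hbound

/-- Corollary `rchebo`: for a `q`-polynomial of index `t ≥ 1` with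
`a_t = 0` and `a_0 ≠ 0` which is `r`-fat with `r > 0`, the integer `r` is large.
`K = F_{q^n}`; the weight of `m` is `dim_{F_q} ker (f - m·x^{q^t})`, encoded as
`Nat.log q` of the kernel cardinality, and `f` is `r`-fat of index `t` when exactly
`r` elements `m` have weight `> 1`. -/
theorem stmt_5 (p e q n k t r : ℕ) (hp : p.Prime) (he : 1 ≤ e) (hq : q = p ^ e)
    (ht : 1 ≤ t) (htn : t < n) (hkn : k < n)
    (K : Type) [Field K] [Fintype K] (hcard : Fintype.card K = q ^ n)
    (a : ℕ → K) (hak : a k ≠ 0) (hat : a t = 0) (ha0 : a 0 ≠ 0)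
    (f : K → K) (hf : f = fun x => ∑ j ∈ Finset.range (k + 1), a j * x ^ q ^ j)
    (d : ℕ) (hd : d = max k t)
    (hr : r = Nat.card {m : K // 1 < Nat.log q (Nat.card {x : K // f x = m * x ^ q ^ t})})
    (hrpos : 0 < r) :
    (r : ℝ) > ((q : ℝ) ^ n + 1) / (q : ℝ) ^ (d ^ 2)
      - (2 * ((d : ℝ) - 1) * (q : ℝ) ^ (d ^ 2) / ((q : ℝ) ^ d - 1)) *
          Real.sqrt ((q : ℝ) ^ n)
      - 1 := by
  exact stmt_5_general p e q n k t r hp he hq ht K hcard a hak ha0 f hf d hd hr hrpos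
end

section
/- Let q be a prime power and let L_U be an F_q-linear set of rank 4 in PG(1, q^4), i.e., L_U = { ⟨u⟩_{F_{q^4}} : u ∈ U \ {0} } for a 4-dimensional F_q-subspace U of F_{q^4}². If |L_U| = q³ + q² + q + 1, then every point of L_U has weight 1 and L_U is PΓL(2, q^4)-equivalent to { ⟨(x, x^q + δ x^{q³})⟩_{F_{q^4}} : x ∈ F_{q^4}^* } for some δ ∈ F_{q^4} with N_{q^4/q}(δ) ≠ 1, where N_{q^4/q} denotes the norm map from F_{q^4} to F_q. -/
/-!
Let `F = F_q` and `K = F_{q^4}`. As `U` has `|L_U|` points over `F`, the map `⟨u⟩_F ↦ ⟨u⟩_K` is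
injective on it, so `U` is scattered: `u, k u ∈ U` with `u ≠ 0` forces `k ∈ F`.

The six Plücker coordinates of a basis of `U` lie in the four-dimensional `F`-space `K`, hence
satisfy two independent relations `s, t` over `F`. A relation with vanishing Pfaffian is a
decomposable bivector and would make two independent vectors of `U` proportional over `K`; so the
quadratic polynomial `Pf(s - X t)` is irreducible over `F`, and it has a root `θ` in the quadratic
extension of `F` inside `K`. With `T` the endomorphism of `U` given by `t⁻¹ s`, decomposability of
`s - θ t` and of its conjugate yields vectors `w, z` such that `det(w, T u) = θ det(w, u)` and
`det(z, T u) = θ^q det(z, u)` on `U`.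

In the coordinates `(det(w, ·), det(z, ·))` of `K × K`, `U` becomes the graph of an `F`-linear map
`f` with `f(θ x) = θ^q f(x)`. Writing `f` as a combination of the powers of the Frobenius, only the
odd ones survive: `f(x) = a x^q + b x^(q^3)`. Rescaling (and exchanging the coordinates if `a = 0`)
gives the normal form, and the graph for `δ` of norm one is not scattered, by Hilbert's theorem 90
and the Chevalley–Warning theorem.
-/

section FiniteField

open FiniteField Polynomial

variable {F K : Type*} [Field F] [Field K] [Algebra F K]

theorem exists_aeval_eq_zero_of_natDegree_dvd_finrank [Finite F] [FiniteDimensional F K]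
    {P : F[X]} (hP : Irreducible P) (hdvd : P.natDegree ∣ Module.finrank F K) :
    ∃ x : K, aeval x P = 0 := by
  have : Fact (Irreducible P) := ⟨hP⟩
  have : FiniteDimensional F (AdjoinRoot P) := (AdjoinRoot.powerBasis hP.ne_zero).finite
  have : Finite (AdjoinRoot P) := Module.finite_of_finite F
  have : Finite K := Module.finite_of_finite F
  have hfinrank : Module.finrank F (AdjoinRoot P) = P.natDegree := by
    rw [(AdjoinRoot.powerBasis hP.ne_zero).finrank, AdjoinRoot.powerBasis_dim]
  obtain ⟨f⟩ := FiniteField.nonempty_algHom_of_finrank_dvd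
    (F := F) (K := AdjoinRoot P) (L := K) (hfinrank ▸ hdvd)
  exact ⟨f (AdjoinRoot.root P), by rw [aeval_algHom_apply, AdjoinRoot.aeval_eq, AdjoinRoot.mk_self,
    map_zero]⟩

theorem exists_ne_zero_bilinForm_self_eq_zero [Finite F] {V : Type*}
    [AddCommGroup V] [Module F V] [FiniteDimensional F V] (hV : 2 < Module.finrank F V)
    (B : LinearMap.BilinForm F V) : ∃ x ≠ 0, B x x = 0 := by
  classical
  have : Fintype F := Fintype.ofFinite F
  let b := Module.finBasis F V
  let P : MvPolynomial (Fin (Module.finrank F V)) F :=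
    ∑ i, ∑ j, .C (B (b i) (b j)) * (.X i * .X j)
  have totalDegree_lt : P.totalDegree < Fintype.card (Fin (Module.finrank F V)) := by
    rw [Fintype.card_fin]
    refine lt_of_le_of_lt (MvPolynomial.totalDegree_finsetSum_le fun i _ =>
      MvPolynomial.totalDegree_finsetSum_le fun j _ => ?_) hV
    refine (MvPolynomial.totalDegree_mul _ _).trans ?_
    rw [MvPolynomial.totalDegree_C, zero_add]
    exact (MvPolynomial.totalDegree_mul _ _).trans (by simp)
  have eval_P (c : Fin (Module.finrank F V) → F) :
      MvPolynomial.eval c P = B (∑ i, c i • b i) (∑ i, c i • b i) := by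
    simp only [P, map_sum, map_mul, MvPolynomial.eval_C, MvPolynomial.eval_X, map_smul,
      LinearMap.sum_apply, LinearMap.smul_apply, smul_eq_mul, Finset.mul_sum]
    rw [Finset.sum_comm]
    exact Finset.sum_congr rfl fun i _ => Finset.sum_congr rfl fun j _ => by ring
  let p := ringChar F
  have hp : p.Prime := CharP.char_is_prime F p
  have zero_mem : MvPolynomial.eval 0 P = 0 := by rw [eval_P]; simp
  have one_lt_card : 1 < Fintype.card {c // MvPolynomial.eval c P = 0} :=
    hp.one_lt.trans_le <| Nat.le_of_dvd (Fintype.card_pos_iff.2 ⟨⟨0, zero_mem⟩⟩)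
      (char_dvd_card_solutions p totalDegree_lt)
  obtain ⟨⟨c, hc⟩, hc0⟩ := Fintype.exists_ne_of_one_lt_card one_lt_card ⟨0, zero_mem⟩
  refine ⟨∑ i, c i • b i, fun h => hc0 (Subtype.ext (funext fun i => ?_)), by rw [← eval_P, hc]⟩
  exact Fintype.linearIndependent_iff.1 b.linearIndependent c h i

variable [Fintype F]

theorem finrank_eq_of_card_eq_pow [Fintype K] {n : ℕ} (h : Fintype.card K = Fintype.card F ^ n) :
    Module.finrank F K = n :=
  Nat.pow_right_injective Fintype.one_lt_card (Module.card_eq_pow_finrank.symm.trans h)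

variable [Finite K]

theorem mem_zpowers_frobeniusAlgEquivOfAlgebraic (σ : Gal(K/F)) :
    σ ∈ Subgroup.zpowers (frobeniusAlgEquivOfAlgebraic F K) := by
  obtain ⟨n, rfl⟩ := (bijective_frobeniusAlgEquivOfAlgebraic_pow F K).surjective σ
  exact Subgroup.npow_mem_zpowers _ _

theorem frobeniusAlgEquivOfAlgebraic_symm_apply {n : ℕ} (hK : Module.finrank F K = n + 1) (x : K) :
    (frobeniusAlgEquivOfAlgebraic F K).symm x = x ^ Fintype.card F ^ n := by
  have hpow : frobeniusAlgEquivOfAlgebraic F K ^ n = (frobeniusAlgEquivOfAlgebraic F K).symm := by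
    have horder := pow_orderOf_eq_one (frobeniusAlgEquivOfAlgebraic F K)
    rw [orderOf_frobeniusAlgEquivOfAlgebraic, hK, pow_succ] at horder
    exact eq_inv_of_mul_eq_one_left horder
  rw [← hpow, AlgEquiv.coe_pow, coe_frobeniusAlgEquivOfAlgebraic_iterate]

end FiniteField

section Scattered

open scoped LinearAlgebra.Projectivization

variable {F K V V' : Type*} [Field F] [Field K] [Algebra F K]
  [AddCommGroup V] [Module F V] [Module K V]

/-- The `F`-linear set `L_U` of an `F`-subspace `U` of a `K`-space `V`, its points being encoded
as the `K`-lines spanned by the nonzero vectors of `U`. -/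
def linearSet (K : Type*) [Field K] [Module K V] (U : Submodule F V) : Set (Submodule K V) :=
  {W | ∃ u ∈ U, u ≠ 0 ∧ W = Submodule.span K {u}}

/-- An `F`-subspace `U` of a `K`-space is scattered when all points of `L_U` have weight one,
i.e. only scalars from `F` can map a nonzero vector of `U` into `U`. -/
def IsScattered (K : Type*) [Field K] [Algebra F K] [Module K V] (U : Submodule F V) : Prop :=
  ∀ u ∈ U, u ≠ 0 → ∀ k : K, k • u ∈ U → k ∈ Set.range (algebraMap F K)

/-- The map `⟨u⟩_F ↦ ⟨u⟩_K` from the points of the projective space of `U` onto `L_U`. -/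
def extendPoint (K : Type*) [Field K] [Module K V] {U : Submodule F V} (P : ℙ F U) :
    Submodule K V :=
  Submodule.span K {(P.rep : V)}

theorem linearSet_graph (f : K →ₗ[F] K) :
    linearSet K f.graph = {W | ∃ x : K, x ≠ 0 ∧ W = Submodule.span K {(x, f x)}} := by
  ext W
  constructor
  · rintro ⟨⟨x, y⟩, rfl : y = f x, hne, rfl⟩
    exact ⟨x, by rintro rfl; simp at hne, rfl⟩
  · rintro ⟨x, hx, rfl⟩
    exact ⟨(x, f x), rfl, by simp [hx], rfl⟩

variable {U : Submodule F V} [IsScalarTower F K V]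

theorem extendPoint_mk (u : U) (hu : u ≠ 0) :
    extendPoint K (.mk F u hu) = Submodule.span K {(u : V)} := by
  obtain ⟨a, ha⟩ := Projectivization.exists_smul_eq_mk_rep F u hu
  have hunit : IsUnit (algebraMap F K a) := a.isUnit.map _
  rw [← Submodule.span_singleton_smul_eq hunit, algebraMap_smul, extendPoint, ← ha]
  rfl

theorem range_extendPoint_eq_linearSet :
    Set.range (extendPoint K : ℙ F U → Submodule K V) = linearSet K U := by
  ext W
  constructor
  · rintro ⟨P, rfl⟩
    exact ⟨P.rep, P.rep.2, by simpa using P.rep_nonzero, rfl⟩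
  · rintro ⟨u, hu, hu0, rfl⟩
    exact ⟨.mk F ⟨u, hu⟩ (by simpa using hu0), extendPoint_mk _ _⟩

theorem extendPoint_injective_of_natCard_linearSet [Finite F] [FiniteDimensional F U]
    (hcard : Nat.card (linearSet K U) =
      ∑ i ∈ Finset.range (Module.finrank F U), Nat.card F ^ i) :
    Function.Injective (extendPoint K : ℙ F U → Submodule K V) := by
  have : Finite U := Module.finite_of_finite F
  have : Finite (ℙ F U) := Quotient.finite _
  rw [← Set.injOn_univ]
  refine Set.injOn_of_ncard_image_eq ?_ Set.finite_univ
  rw [Set.image_univ, range_extendPoint_eq_linearSet, ← Nat.card_coe_set_eq, hcard,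
    Set.ncard_univ, Projectivization.card_of_finrank F U rfl]

theorem isScattered_of_injective_extendPoint
    (hinj : Function.Injective (extendPoint K : ℙ F U → Submodule K V)) : IsScattered K U := by
  intro u hu hu0 k hku
  obtain rfl | hk := eq_or_ne k 0
  · exact ⟨0, map_zero _⟩
  have hu0' : (⟨u, hu⟩ : U) ≠ 0 := by simpa using hu0
  have hku0 : (⟨k • u, hku⟩ : U) ≠ 0 := by simpa [hk] using hu0
  have hmk : Projectivization.mk F (⟨k • u, hku⟩ : U) hku0 = .mk F (⟨u, hu⟩ : U) hu0' := by
    apply hinj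
    rw [extendPoint_mk, extendPoint_mk]
    exact Submodule.span_singleton_smul_eq hk.isUnit u
  obtain ⟨c, hc⟩ := (Projectivization.mk_eq_mk_iff' F _ _ hku0 hu0').1 hmk
  have hc' : algebraMap F K c • u = k • u := by
    rw [algebraMap_smul]
    exact congrArg Subtype.val hc
  exact ⟨c, smul_left_injective K hu0 hc'⟩

theorem IsScattered.weight_eq_one (hU : IsScattered K U) {W : Submodule K V}
    (hW : W ∈ linearSet K U) : Module.finrank F ↥(U ⊓ W.restrictScalars F) = 1 := by
  obtain ⟨u, hu, hu0, rfl⟩ := hW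
  let generator : ↥(U ⊓ (Submodule.span K {u}).restrictScalars F) :=
    ⟨u, hu, Submodule.mem_span_singleton_self u⟩
  refine (finrank_eq_one_iff_of_nonzero' generator fun h => hu0 (congrArg Subtype.val h)).2 ?_
  rintro ⟨v, hv, hvu⟩
  obtain ⟨k, rfl⟩ := Submodule.mem_span_singleton.1 hvu
  obtain ⟨c, rfl⟩ := hU u hu hu0 k hv
  exact ⟨c, Subtype.ext (algebraMap_smul K c u).symm⟩

variable [AddCommGroup V'] [Module F V'] [Module K V'] [IsScalarTower F K V']

theorem linearSet_map (g : V ≃ₗ[K] V') (U : Submodule F V) :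
    linearSet K (U.map (g.restrictScalars F).toLinearMap) =
      {W | ∃ u ∈ U, u ≠ 0 ∧ W = Submodule.span K {g u}} := by
  ext W
  simp [linearSet]

theorem IsScattered.map (hU : IsScattered K U) (g : V ≃ₗ[K] V') :
    IsScattered K (U.map (g.restrictScalars F).toLinearMap) := by
  rintro _ ⟨u, hu, rfl⟩ hu0 k ⟨v, hv, hvu⟩
  refine hU u hu (by rintro rfl; simp at hu0) k ?_
  have hvku : v = k • u := g.injective (by simpa using hvu)
  exact hvku ▸ hv

end Scattered

section PlaneDet

variable {K : Type*} [Field K]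

/-- The determinant of two vectors of `K × K`, as a bilinear form. -/
def planeDet : (K × K) →ₗ[K] (K × K) →ₗ[K] K :=
  (LinearMap.mul K K).compl₁₂ (.fst K K K) (.snd K K K) -
    (LinearMap.mul K K).compl₁₂ (.snd K K K) (.fst K K K)

@[simp]
theorem planeDet_apply (u v : K × K) : planeDet u v = u.1 * v.2 - u.2 * v.1 := rfl

theorem planeDet_swap (u v : K × K) : planeDet u v = -planeDet v u := by
  simp only [planeDet_apply]
  ring

theorem exists_smul_eq_of_planeDet_eq_zero {u v : K × K} (hu : u ≠ 0) (h : planeDet u v = 0) :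
    ∃ k : K, v = k • u := by
  rw [planeDet_apply, sub_eq_zero] at h
  by_cases hu₁ : u.1 = 0
  · have hu₂ : u.2 ≠ 0 := fun hu₂ => hu (Prod.ext hu₁ hu₂)
    have hv₁ : v.1 = 0 := by simpa [hu₁, hu₂, eq_comm] using h
    exact ⟨v.2 / u.2, Prod.ext (by simp [hu₁, hv₁]) (by simp [hu₂])⟩
  · refine ⟨v.1 / u.1, Prod.ext (by simp [hu₁]) ?_⟩
    rw [Prod.smul_snd, smul_eq_mul]
    field_simp
    linear_combination h

theorem planeDet_eq_zero_of_planeDet_eq_zero {u v w : K × K} (hw : w ≠ 0)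
    (hu : planeDet w u = 0) (hv : planeDet w v = 0) : planeDet u v = 0 := by
  have plucker_relation : planeDet u v • w = planeDet w v • u - planeDet w u • v := by
    ext <;> simp <;> ring
  rw [hu, hv, zero_smul, zero_smul, sub_zero] at plucker_relation
  exact (smul_eq_zero.1 plucker_relation).resolve_right hw

/-- The coordinates of a vector of `K × K` given by its determinants with two independent
vectors `w` and `z`. -/
noncomputable def planeDetEquiv {w z : K × K} (hwz : planeDet w z ≠ 0) :
    (K × K) ≃ₗ[K] (K × K) :=
  .ofInjectiveEndo ((planeDet w).prod (planeDet z)) <| by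
    rw [injective_iff_map_eq_zero]
    intro u hu
    have hw : planeDet w u = 0 := congrArg Prod.fst hu
    have hz : planeDet z u = 0 := congrArg Prod.snd hu
    by_contra hu0
    refine hwz (planeDet_eq_zero_of_planeDet_eq_zero hu0 ?_ ?_)
    · rw [planeDet_swap, hw, neg_zero]
    · rw [planeDet_swap, hz, neg_zero]

@[simp]
theorem planeDetEquiv_apply {w z : K × K} (hwz : planeDet w z ≠ 0) (u : K × K) :
    planeDetEquiv hwz u = (planeDet w u, planeDet z u) := rfl

theorem IsScattered.exists_smul_eq {F : Type*} [Field F] [Algebra F K] {U : Submodule F (K × K)}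
    (hU : IsScattered K U) {u v : U} (hu : u ≠ 0) (h : planeDet (u : K × K) v = 0) :
    ∃ c : F, v = c • u := by
  have hu' : (u : K × K) ≠ 0 := by simpa using hu
  obtain ⟨k, hk⟩ := exists_smul_eq_of_planeDet_eq_zero hu' h
  obtain ⟨c, rfl⟩ := hU u u.2 hu' k (hk ▸ v.2)
  exact ⟨c, Subtype.ext (by rw [hk, algebraMap_smul]; rfl)⟩

theorem IsScattered.exists_planeDet_ne_zero {F : Type*} [Field F] [Algebra F K]
    {U : Submodule F (K × K)} (hU : IsScattered K U) (hfin : 1 < Module.finrank F U) :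
    ∃ u v : U, planeDet (u : K × K) v ≠ 0 := by
  have : Nontrivial U := Module.nontrivial_of_finrank_pos (R := F) (by lia)
  obtain ⟨u, hu⟩ := exists_ne (0 : U)
  by_contra! hdet
  refine hfin.not_ge (finrank_le_one u fun v => ?_)
  obtain ⟨c, hc⟩ := hU.exists_smul_eq hu (hdet u v)
  exact ⟨c, hc.symm⟩

end PlaneDet

section Bivectors

open Matrix

section CommRing

variable {R : Type*} [CommRing R]

/-- The alternating matrix of a bivector, given by its six coordinates
`(s₀₁, s₀₂, s₀₃, s₁₂, s₁₃, s₂₃)`. -/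
def altMatrix (s : Fin 6 → R) : Matrix (Fin 4) (Fin 4) R :=
  !![0, s 0, s 1, s 2; -s 0, 0, s 3, s 4; -s 1, -s 3, 0, s 5; -s 2, -s 4, -s 5, 0]

/-- The Pfaffian of `altMatrix s`; it vanishes exactly on decomposable bivectors. -/
def pfaffian (s : Fin 6 → R) : R := s 0 * s 5 - s 1 * s 4 + s 2 * s 3

/-- The Hodge dual of a bivector. -/
def hodgeDual (s : Fin 6 → R) : Fin 6 → R := ![s 5, -s 4, s 3, s 2, -s 1, s 0]

theorem altMatrix_sub_smul (s t : Fin 6 → R) (c : R) :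
    altMatrix (s - c • t) = altMatrix s - c • altMatrix t := by
  ext i j
  fin_cases i <;> fin_cases j <;> simp [altMatrix] <;> ring

theorem altMatrix_hodgeDual_mul_altMatrix (s : Fin 6 → R) :
    altMatrix (hodgeDual s) * altMatrix s = -pfaffian s • 1 := by
  ext i j
  fin_cases i <;> fin_cases j <;>
    simp [altMatrix, hodgeDual, pfaffian, mul_apply, Fin.sum_univ_four] <;> ring

theorem altMatrix_mul_altMatrix_mul_transpose (s d : Fin 6 → R) :
    altMatrix s * altMatrix d * (altMatrix s)ᵀ =
      (s ⬝ᵥ d) • altMatrix s - pfaffian s • altMatrix (hodgeDual d) := by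
  ext i j
  fin_cases i <;> fin_cases j <;>
    simp [altMatrix, hodgeDual, pfaffian, mul_apply, dotProduct, Fin.sum_univ_succ] <;> ring

theorem altMatrix_apply_symm (s : Fin 6 → R) (i j : Fin 4) :
    altMatrix s i j = -altMatrix s j i := by
  fin_cases i <;> fin_cases j <;> simp [altMatrix]

theorem eq_zero_of_altMatrix_eq_zero {s : Fin 6 → R} (h : altMatrix s = 0) : s = 0 := by
  have entry (i j : Fin 4) : altMatrix s i j = 0 := congr_fun₂ h i j
  ext i
  fin_cases i
  exacts [entry 0 1, entry 0 2, entry 0 3, entry 1 2, entry 1 3, entry 2 3]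

end CommRing

theorem altMatrix_map {R S : Type*} [CommRing R] [CommRing S] (f : R →+* S) (s : Fin 6 → R) :
    altMatrix (f ∘ s) = (altMatrix s).map f := by
  ext i j
  fin_cases i <;> fin_cases j <;> simp [altMatrix]

theorem pfaffian_map {R S : Type*} [CommRing R] [CommRing S] (f : R →+* S) (s : Fin 6 → R) :
    pfaffian (f ∘ s) = f (pfaffian s) := by
  simp [pfaffian]

variable {K : Type*} [Field K]

/-- The Plücker coordinates of four vectors of `K × K`: the six determinants of pairs of them, in
the order used by `altMatrix`. -/
def plucker (e : Fin 4 → K × K) : Fin 6 → K :=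
  ![planeDet (e 0) (e 1), planeDet (e 0) (e 2), planeDet (e 0) (e 3),
    planeDet (e 1) (e 2), planeDet (e 1) (e 3), planeDet (e 2) (e 3)]

theorem altMatrix_plucker (e : Fin 4 → K × K) :
    altMatrix (plucker e) = .of fun i j => planeDet (e i) (e j) := by
  ext i j
  fin_cases i <;> fin_cases j <;> simp [altMatrix, plucker] <;> ring

theorem planeDet_sum_smul_sum_smul (A : Matrix (Fin 4) (Fin 4) K) (e : Fin 4 → K × K)
    (k l : Fin 4) :
    planeDet (∑ i, A k i • e i) (∑ j, A l j • e j) =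
      (A * altMatrix (plucker e) * Aᵀ) k l := by
  simp only [altMatrix_plucker, mul_apply, of_apply, transpose_apply, map_sum, map_smul,
    LinearMap.sum_apply, LinearMap.smul_apply, smul_eq_mul, Finset.mul_sum, Finset.sum_mul]
  exact Finset.sum_congr rfl fun j _ => Finset.sum_congr rfl fun i _ => by ring

theorem planeDet_altMatrix_rows_eq_zero {s : Fin 6 → K} {e : Fin 4 → K × K}
    (hpf : pfaffian s = 0) (hs : s ⬝ᵥ plucker e = 0) (k l : Fin 4) :
    planeDet (∑ i, altMatrix s k i • e i) (∑ j, altMatrix s l j • e j) = 0 := by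
  rw [planeDet_sum_smul_sum_smul, altMatrix_mul_altMatrix_mul_transpose, hs, hpf, zero_smul,
    zero_smul, sub_zero, Matrix.zero_apply]

theorem exists_ne_zero_altMatrix_mulVec_planeDet_eq_zero {s : Fin 6 → K} {e : Fin 4 → K × K}
    (hpf : pfaffian s = 0) (hs : s ⬝ᵥ plucker e = 0) :
    ∃ w ≠ 0, altMatrix s *ᵥ (fun i => planeDet w (e i)) = 0 := by
  have mulVec_eq (w : K × K) (l : Fin 4) :
      (altMatrix s *ᵥ fun i => planeDet w (e i)) l =
        planeDet w (∑ i, altMatrix s l i • e i) := by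
    simp only [mulVec, dotProduct, map_sum, map_smul, smul_eq_mul]
  by_cases hrows : ∃ k, ∑ i, altMatrix s k i • e i ≠ 0
  · obtain ⟨k, hk⟩ := hrows
    exact ⟨_, hk, funext fun l =>
      (mulVec_eq _ l).trans (planeDet_altMatrix_rows_eq_zero hpf hs k l)⟩
  · push Not at hrows
    exact ⟨(1, 0), by simp, funext fun l => by rw [mulVec_eq, hrows, map_zero, Pi.zero_apply]⟩

variable {F : Type*} [Field F] [Algebra F K] {U : Submodule F (K × K)}

-- A bivector whose Pfaffian vanishes is decomposable, so it annihilates the Plücker coordinates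
-- only if two independent vectors of `U` are proportional over `K`.
theorem IsScattered.pfaffian_ne_zero (hU : IsScattered K U) (e : Module.Basis (Fin 4) F U)
    {s : Fin 6 → F} (hs0 : s ≠ 0)
    (hs : (algebraMap F K ∘ s) ⬝ᵥ plucker (fun i => (e i : K × K)) = 0) : pfaffian s ≠ 0 := by
  intro hpf
  let row (k : Fin 4) : U := ∑ i, altMatrix s k i • e i
  have repr_row (k l : Fin 4) : e.repr (row k) l = altMatrix s k l := by
    rw [e.repr_sum_self]
  have coe_row (k : Fin 4) :
      (row k : K × K) = ∑ i, altMatrix (algebraMap F K ∘ s) k i • (e i : K × K) := by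
    simp [row, altMatrix_map, algebraMap_smul]
  have hpf' : pfaffian (algebraMap F K ∘ s) = 0 := by rw [pfaffian_map, hpf, map_zero]
  refine hs0 (eq_zero_of_altMatrix_eq_zero (ext fun l k => ?_))
  rw [Matrix.zero_apply]
  obtain hk | hk := eq_or_ne (row k) 0
  · rw [altMatrix_apply_symm, ← repr_row, hk, map_zero, Finsupp.zero_apply, neg_zero]
  · have hdet : planeDet (row k : K × K) (row l) = 0 := by
      rw [coe_row, coe_row, planeDet_altMatrix_rows_eq_zero hpf' hs]
    obtain ⟨c, hc⟩ := hU.exists_smul_eq hk hdet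
    have hdiag : altMatrix s k k = 0 := by fin_cases k <;> rfl
    rw [← repr_row, hc, map_smul, Finsupp.smul_apply, repr_row,
      hdiag, smul_zero]

theorem isUnit_altMatrix {s : Fin 6 → K} (hs : pfaffian s ≠ 0) : IsUnit (altMatrix s) := by
  refine .of_mul_eq_one ((-pfaffian s)⁻¹ • altMatrix (hodgeDual s)) (mul_eq_one_comm.1 ?_)
  rw [smul_mul_assoc, altMatrix_hodgeDual_mul_altMatrix, inv_smul_smul₀ (neg_ne_zero.2 hs)]

section Pencil

open Polynomial

/-- The Pfaffian of the pencil of bivectors `s - X t`. -/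
noncomputable def pfaffianPencil (s t : Fin 6 → F) : F[X] :=
  pfaffian (C ∘ s - (X : F[X]) • C ∘ t)

theorem aeval_pfaffianPencil (s t : Fin 6 → F) (x : K) :
    aeval x (pfaffianPencil s t) =
      pfaffian (algebraMap F K ∘ s - x • algebraMap F K ∘ t) := by
  simp [pfaffianPencil, pfaffian, mul_comm x]

theorem pfaffianPencil_eq_quadratic (s t : Fin 6 → F) :
    pfaffianPencil s t = C (pfaffian t) * X ^ 2 +
      C (pfaffian s + pfaffian t - pfaffian (s + t)) * X + C (pfaffian s) := by
  simp only [pfaffianPencil, pfaffian, Pi.sub_apply, Pi.add_apply, Pi.smul_apply,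
    Function.comp_apply, smul_eq_mul, C_add, C_sub, C_mul]
  ring

theorem natDegree_pfaffianPencil (s : Fin 6 → F) {t : Fin 6 → F} (ht : pfaffian t ≠ 0) :
    (pfaffianPencil s t).natDegree = 2 := by
  rw [pfaffianPencil_eq_quadratic, natDegree_quadratic ht]

theorem irreducible_pfaffianPencil {s t : Fin 6 → F}
    (hst : ∀ a b : F, (a, b) ≠ 0 → pfaffian (a • s + b • t) ≠ 0) :
    Irreducible (pfaffianPencil s t) := by
  have ht : pfaffian t ≠ 0 := by simpa using hst 0 1 (by simp)
  refine irreducible_of_degree_le_three_of_not_isRoot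
    (by simp [natDegree_pfaffianPencil s ht]) fun x hx => hst 1 (-x) (by simp) ?_
  have hx' : aeval x (pfaffianPencil s t) = 0 := by
    rwa [coe_aeval_eq_eval]
  rw [aeval_pfaffianPencil, Algebra.algebraMap_self] at hx'
  rwa [one_smul, neg_smul, ← sub_eq_add_neg]

end Pencil

theorem exists_linearIndependent_pair_dotProduct_eq_zero {ι : Type*} [Fintype ι]
    [FiniteDimensional F K] (p : ι → K) (hcard : Module.finrank F K + 1 < Fintype.card ι) :
    ∃ s t : ι → F, LinearIndependent F ![s, t] ∧
      (algebraMap F K ∘ s) ⬝ᵥ p = 0 ∧ (algebraMap F K ∘ t) ⬝ᵥ p = 0 := by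
  let relations : Submodule F (ι → F) := (Fintype.linearCombination F p).ker
  have mem_relations (s : relations) : (algebraMap F K ∘ s) ⬝ᵥ p = 0 := by
    rw [← LinearMap.mem_ker.1 s.2, Fintype.linearCombination_apply]
    exact Finset.sum_congr rfl fun i _ => (Algebra.smul_def _ _).symm
  have hfinrank : 1 < Module.finrank F relations := by
    have rank_nullity : _ + Module.finrank F relations = _ :=
      (Fintype.linearCombination F p).finrank_range_add_finrank_ker
    have := (Fintype.linearCombination F p).range.finrank_le
    rw [Module.finrank_fintype_fun_eq_card] at rank_nullity
    lia
  have : Nontrivial relations := Module.nontrivial_of_finrank_pos (R := F) (by lia)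
  obtain ⟨s, hs⟩ := exists_ne (0 : relations)
  obtain ⟨t, hst⟩ := exists_linearIndependent_pair_of_one_lt_finrank hfinrank hs
  exact ⟨s, t, LinearIndependent.pair_iff.2 fun a b hab =>
    LinearIndependent.pair_iff.1 hst a b (Subtype.ext hab), mem_relations s, mem_relations t⟩

-- Two independent linear relations exist among the six Plücker coordinates, as these lie in the
-- four-dimensional space `K`; their pencil has no member of vanishing Pfaffian over `F`, but it
-- acquires one over the quadratic extension of `F`.
theorem IsScattered.exists_pfaffian_sub_smul_eq_zero [Finite F] [FiniteDimensional F K]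
    (hU : IsScattered K U) (e : Module.Basis (Fin 4) F U) (hK : Module.finrank F K = 4) :
    ∃ s t : Fin 6 → F, pfaffian t ≠ 0 ∧
      (algebraMap F K ∘ s) ⬝ᵥ plucker (fun i => (e i : K × K)) = 0 ∧
      (algebraMap F K ∘ t) ⬝ᵥ plucker (fun i => (e i : K × K)) = 0 ∧
      ∃ θ ∉ Set.range (algebraMap F K),
        pfaffian (algebraMap F K ∘ s - θ • algebraMap F K ∘ t) = 0 := by
  obtain ⟨s, t, hli, hs, ht⟩ := exists_linearIndependent_pair_dotProduct_eq_zero (F := F)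
    (plucker fun i => (e i : K × K)) (by simp [hK])
  have pencil_ne_zero (a b : F) (hab : (a, b) ≠ 0) : pfaffian (a • s + b • t) ≠ 0 := by
    refine hU.pfaffian_ne_zero e (fun h => hab (Prod.ext_iff.2 ?_)) ?_
    · exact LinearIndependent.pair_iff.1 hli a b h
    · have comp_eq : algebraMap F K ∘ (a • s + b • t) =
          algebraMap F K a • (algebraMap F K ∘ s) + algebraMap F K b • (algebraMap F K ∘ t) := by
        ext i
        simp [Algebra.smul_def]
      rw [comp_eq, add_dotProduct, smul_dotProduct, smul_dotProduct, hs, ht, smul_zero, smul_zero,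
        add_zero]
  have ht0 : pfaffian t ≠ 0 := by simpa using pencil_ne_zero 0 1 (by simp)
  obtain ⟨θ, hθ⟩ := exists_aeval_eq_zero_of_natDegree_dvd_finrank (K := K)
    (irreducible_pfaffianPencil pencil_ne_zero)
    (by rw [natDegree_pfaffianPencil s ht0, hK]; norm_num)
  refine ⟨s, t, ht0, hs, ht, θ, ?_, by rw [← aeval_pfaffianPencil, hθ]⟩
  rintro ⟨c, rfl⟩
  refine (irreducible_pfaffianPencil pencil_ne_zero).not_isRoot_of_natDegree_ne_one
    (by simp [natDegree_pfaffianPencil s ht0]) (x := c) ?_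
  rwa [Polynomial.aeval_algebraMap_apply_eq_algebraMap_eval, map_eq_zero] at hθ

theorem IsScattered.exists_end_planeDet_apply_eq [Finite F] [FiniteDimensional F K]
    (hU : IsScattered K U) (hUfin : Module.finrank F U = 4) (hK : Module.finrank F K = 4) :
    ∃ (T : Module.End F U) (θ : K), θ ∉ Set.range (algebraMap F K) ∧ ∀ φ : Gal(K/F),
      ∃ w ≠ 0, ∀ u : U, planeDet w (T u : K × K) = φ θ * planeDet w u := by
  have : FiniteDimensional F U := .of_finrank_eq_succ hUfin
  let e : Module.Basis (Fin 4) F U := Module.finBasisOfFinrankEq F U hUfin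
  obtain ⟨s, t, ht0, hs, ht, θ, hθF, hθ⟩ := hU.exists_pfaffian_sub_smul_eq_zero e hK
  have ht0' : pfaffian (algebraMap F K ∘ t) ≠ 0 := by simpa [pfaffian_map] using ht0
  let N : Matrix (Fin 4) (Fin 4) F := (altMatrix t)⁻¹ * altMatrix s
  have hN : altMatrix (algebraMap F K ∘ t) * N.map (algebraMap F K) =
      altMatrix (algebraMap F K ∘ s) := by
    rw [altMatrix_map, altMatrix_map, ← Matrix.map_mul,
      mul_nonsing_inv_cancel_left _ _ ((isUnit_iff_isUnit_det _).1 (isUnit_altMatrix ht0))]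
  let T : Module.End F U := toLin e e Nᵀ
  have T_basis (i : Fin 4) :
      (T (e i) : K × K) = ∑ j, N.map (algebraMap F K) i j • (e j : K × K) := by
    simp [T, toLin_self, algebraMap_smul]
  refine ⟨T, θ, hθF, fun φ => ?_⟩
  have hφθ : pfaffian (algebraMap F K ∘ s - φ θ • algebraMap F K ∘ t) = 0 := by
    simpa [pfaffian] using congrArg φ hθ
  obtain ⟨w, hw0, hw⟩ := exists_ne_zero_altMatrix_mulVec_planeDet_eq_zero hφθ
    (by rw [sub_dotProduct, smul_dotProduct, hs, ht, smul_zero, sub_zero])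
  rw [altMatrix_sub_smul, ← hN, sub_mulVec, ← mulVec_mulVec, smul_mulVec, ← mulVec_smul,
    sub_eq_zero] at hw
  have eigen := mulVec_injective_of_isUnit (isUnit_altMatrix ht0') hw
  let evalW : U →ₗ[F] K := ((planeDet w).restrictScalars F).comp U.subtype
  have heval : evalW ∘ₗ T = φ θ • evalW := e.ext fun i => by
    calc planeDet w (T (e i) : K × K)
        = ∑ j, N.map (algebraMap F K) i j * planeDet w (e j : K × K) := by
          simp only [T_basis, map_sum, map_smul, smul_eq_mul]
      _ = φ θ * planeDet w (e i : K × K) := congr_fun eigen i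
  exact ⟨w, hw0, fun u => LinearMap.congr_fun heval u⟩

end Bivectors

section CyclicExtension

variable {F K : Type*} [Field F] [Field K] [Algebra F K]

/-- The Lunardon–Polverino map `x ↦ φ(x) + δ φ⁻¹(x)`; for the `q`-Frobenius `φ` of `F_{q^n}` it is
`x ↦ x^q + δ x^{q^{n-1}}`. -/
def lunardonPolverino (φ : Gal(K/F)) (δ : K) : K →ₗ[F] K :=
  φ.toLinearMap + δ • φ.symm.toLinearMap

@[simp]
theorem lunardonPolverino_apply (φ : Gal(K/F)) (δ x : K) :
    lunardonPolverino φ δ x = φ x + δ * φ.symm x := rfl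

theorem linearIndependent_algEquiv_toLinearMap {ι : Type*} {σ : ι → Gal(K/F)}
    (hσ : Function.Injective σ) : LinearIndependent K fun i => (σ i).toLinearMap :=
  (linearIndependent_toLinearMap F K K).comp (fun i => (σ i).toAlgHom)
    (AlgEquiv.coe_toAlgHom_injective.comp hσ)

variable [FiniteDimensional F K] [IsGalois F K] {φ : Gal(K/F)}

theorem mem_range_algebraMap_of_generator_apply_eq (hφ : ∀ σ : Gal(K/F), σ ∈ Subgroup.zpowers φ)
    {x : K} (hx : φ x = x) : x ∈ Set.range (algebraMap F K) := by
  have hstab : Subgroup.zpowers φ ≤ MulAction.stabilizer Gal(K/F) x := by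
    rwa [Subgroup.zpowers_le]
  exact IntermediateField.mem_bot.1 ((IsGalois.mem_bot_iff_fixed x).2 fun σ => hstab (hφ σ))

theorem linearIndependent_pow_toLinearMap (hφ : ∀ σ : Gal(K/F), σ ∈ Subgroup.zpowers φ) {n : ℕ}
    (hn : Module.finrank F K = n) :
    LinearIndependent K fun i : Fin n => (φ ^ (i : ℕ)).toLinearMap := by
  have horder : orderOf φ = n := by
    rw [orderOf_eq_card_of_forall_mem_zpowers hφ, IsGalois.card_aut_eq_finrank, hn]
  refine linearIndependent_algEquiv_toLinearMap fun i j hij => Fin.ext ?_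
  exact pow_injOn_Iio_orderOf (by simp [horder]) (by simp [horder]) hij

theorem exists_eq_sum_smul_pow_toLinearMap (hφ : ∀ σ : Gal(K/F), σ ∈ Subgroup.zpowers φ) {n : ℕ}
    (hn : Module.finrank F K = n) (f : K →ₗ[F] K) :
    ∃ a : Fin n → K, ∑ i, a i • (φ ^ (i : ℕ)).toLinearMap = f := by
  have hspan := (linearIndependent_pow_toLinearMap hφ hn).span_eq_top_of_card_eq_finrank'
    (by rw [Fintype.card_fin, Module.finrank_linearMap_self, hn])
  exact (Submodule.mem_span_range_iff_exists_fun K).1 (hspan ▸ Submodule.mem_top)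

theorem exists_eq_smul_add_smul_symm_of_semilinear (hφ : ∀ σ : Gal(K/F), σ ∈ Subgroup.zpowers φ)
    (hK : Module.finrank F K = 4) {θ : K} (hθ : φ θ ≠ θ) {f : K →ₗ[F] K}
    (hf : ∀ x, f (θ * x) = φ θ * f x) :
    ∃ a b : K, ∀ x, f x = a * φ x + b * φ.symm x := by
  obtain ⟨a, rfl⟩ := exists_eq_sum_smul_pow_toLinearMap hφ hK f
  have coeff_eq_zero : ∀ i, a i * ((φ ^ (i : ℕ)) θ - φ θ) = 0 := by
    refine Fintype.linearIndependent_iff.1 (linearIndependent_pow_toLinearMap hφ hK) _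
      (LinearMap.ext fun x => ?_)
    have hx := hf x
    simp only [LinearMap.sum_apply, LinearMap.smul_apply, AlgEquiv.toLinearMap_apply, smul_eq_mul,
      map_mul, Finset.mul_sum, LinearMap.zero_apply] at hx ⊢
    rw [← sub_eq_zero, ← Finset.sum_sub_distrib] at hx
    rw [← hx]
    exact Finset.sum_congr rfl fun i _ => by ring
  have h0 : a 0 = 0 :=
    (mul_eq_zero.1 (coeff_eq_zero 0)).resolve_right (by simpa using sub_ne_zero.2 hθ.symm)
  have h2 : a 2 = 0 := by
    refine (mul_eq_zero.1 (coeff_eq_zero 2)).resolve_right fun h => hθ ?_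
    exact φ.injective (by simpa [sub_eq_zero, pow_two] using h)
  have hsymm : φ ^ 3 = φ.symm := by
    have horder : φ ^ Nat.card Gal(K/F) = 1 := pow_card_eq_one'
    rw [IsGalois.card_aut_eq_finrank, hK, pow_succ] at horder
    exact eq_inv_of_mul_eq_one_left horder
  exact ⟨a 1, a 3, fun x => by simp [Fin.sum_univ_four, h0, h2, ← hsymm]⟩

theorem exists_sub_eq_of_trace_eq_zero (hφ : ∀ σ : Gal(K/F), σ ∈ Subgroup.zpowers φ) {c : K}
    (hc : Algebra.trace F K c = 0) : ∃ t : K, φ t - t = c := by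
  let D : K →ₗ[F] K := φ.toLinearMap - .id
  have range_le : D.range ≤ (Algebra.trace F K).ker := by
    rintro _ ⟨t, rfl⟩
    simp [D, Algebra.trace_eq_of_algEquiv φ t]
  have finrank_ker_le : Module.finrank F D.ker ≤ 1 := by
    refine finrank_le_one ⟨1, by simp [D]⟩ fun ⟨x, hx⟩ => ?_
    obtain ⟨r, rfl⟩ := mem_range_algebraMap_of_generator_apply_eq hφ
      (sub_eq_zero.1 (LinearMap.mem_ker.1 hx))
    exact ⟨r, Subtype.ext (by simp [Algebra.smul_def])⟩
  have rank_nullity := D.finrank_range_add_finrank_ker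
  have trace_rank_nullity := (Algebra.trace F K).finrank_range_add_finrank_ker
  rw [LinearMap.range_eq_top.2 (Algebra.trace_surjective F K), finrank_top,
    Module.finrank_self] at trace_rank_nullity
  have range_eq := Submodule.eq_of_le_of_finrank_le range_le (by lia)
  exact range_eq.ge hc

end CyclicExtension

-- If `δ = ε / φ⁻¹(ε)` has norm one, then a suitable `y` makes `ε * y * φ y` of trace zero, say
-- equal to `φ t - t`, and multiplication by `t` keeps the vector over `y⁻¹` in the graph.
theorem IsScattered.norm_ne_one {F K : Type} [Field F] [Finite F] [Field K] [Algebra F K]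
    [FiniteDimensional F K] [IsGalois F K] {φ : Gal(K/F)}
    (hφ : ∀ σ : Gal(K/F), σ ∈ Subgroup.zpowers φ) (hK : 2 < Module.finrank F K) {δ : K}
    (hδ : IsScattered K (lunardonPolverino φ δ).graph) : Algebra.norm F δ ≠ 1 := by
  intro hnorm
  have : IsCyclic Gal(K/F) := ⟨φ, hφ⟩
  obtain ⟨ε, hε⟩ := groupCohomology.exists_div_of_norm_eq_one (g := φ.symm)
    (fun σ => (Subgroup.zpowers_inv (g := φ)).ge (hφ σ)) hnorm
  obtain ⟨y, hy0, hy⟩ := exists_ne_zero_bilinForm_self_eq_zero hK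
    ((Algebra.traceForm F K).compl₁₂ (LinearMap.mulLeft F (ε : K)) φ.toLinearMap)
  have htrace : Algebra.trace F K (ε * y * φ y) = 0 := hy
  obtain ⟨t, ht⟩ := exists_sub_eq_of_trace_eq_zero hφ htrace
  have hgraph : t • (y⁻¹, lunardonPolverino φ δ y⁻¹) ∈ (lunardonPolverino φ δ).graph := by
    have ht' : t - φ.symm t = φ.symm ε * φ.symm y * y := by
      simpa using congrArg φ.symm ht
    have hδε : δ * φ.symm ε = ε := by
      rw [← hε, div_mul_cancel₀ _ (by simp)]
    have hφy : φ y ≠ 0 := by simpa using hy0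
    have hφy' : φ.symm y ≠ 0 := by simpa using hy0
    simp only [LinearMap.mem_graph_iff, Prod.smul_mk, smul_eq_mul, lunardonPolverino_apply, map_mul,
      map_inv₀]
    field_simp
    linear_combination -φ.symm y * ht + φ y * δ * ht' + φ.symm y * y * φ y * hδε
  obtain ⟨c, rfl⟩ := hδ _ rfl (by simp [hy0]) t hgraph
  rw [φ.commutes, sub_self] at ht
  simp [hy0] at ht

section NormalForm

variable {F K : Type*} [Field F] [Field K] [Algebra F K] {U : Submodule F (K × K)}

theorem IsScattered.planeDet_ne_zero_of_ne (hU : IsScattered K U) (hfin : 1 < Module.finrank F U)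
    {T : Module.End F U} {θ η : K} (hθη : θ ≠ η) {w z : K × K} (hw0 : w ≠ 0) (hz0 : z ≠ 0)
    (hw : ∀ u : U, planeDet w (T u : K × K) = θ * planeDet w u)
    (hz : ∀ u : U, planeDet z (T u : K × K) = η * planeDet z u) : planeDet w z ≠ 0 := by
  intro hwz
  obtain ⟨k, rfl⟩ := exists_smul_eq_of_planeDet_eq_zero hw0 hwz
  have hk : k ≠ 0 := by rintro rfl; simp at hz0
  have planeDet_eq_zero (u : U) : planeDet w u = 0 := by
    have hu := hz u
    rw [map_smul, LinearMap.smul_apply, LinearMap.smul_apply, hw, smul_eq_mul, smul_eq_mul] at hu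
    have : (k * (θ - η)) * planeDet w u = 0 := by linear_combination hu
    exact (mul_eq_zero.1 this).resolve_left (mul_ne_zero hk (sub_ne_zero.2 hθη))
  obtain ⟨u, v, huv⟩ := hU.exists_planeDet_ne_zero hfin
  exact huv (planeDet_eq_zero_of_planeDet_eq_zero hw0 (planeDet_eq_zero u) (planeDet_eq_zero v))

theorem IsScattered.eq_zero_of_planeDet_eq_zero (hU : IsScattered K U) {T : Module.End F U}
    {θ η : K} (hη : η ∉ Set.range (algebraMap F K)) {w z : K × K} (hwz : planeDet w z ≠ 0)
    (hw : ∀ u : U, planeDet w (T u : K × K) = θ * planeDet w u)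
    (hz : ∀ u : U, planeDet z (T u : K × K) = η * planeDet z u)
    {u : U} (hu : planeDet w u = 0) : u = 0 := by
  by_contra hu0
  have hw0 : w ≠ 0 := by rintro rfl; simp at hwz
  have hwT : planeDet w (T u : K × K) = 0 := by rw [hw, hu, mul_zero]
  obtain ⟨c, hc⟩ := hU.exists_smul_eq hu0 (planeDet_eq_zero_of_planeDet_eq_zero hw0 hu hwT)
  have hcη : (algebraMap F K c - η) * planeDet z u = 0 := by
    rw [sub_mul, ← hz, hc, Submodule.coe_smul, ← algebraMap_smul K c (u : K × K), map_smul,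
      smul_eq_mul, sub_self]
  have hzu : planeDet z u = 0 :=
    (mul_eq_zero.1 hcη).resolve_left fun h => hη ⟨c, sub_eq_zero.1 h⟩
  have hcoord : planeDetEquiv hwz u = 0 := by rw [planeDetEquiv_apply, hu, hzu, Prod.mk_zero_zero]
  exact hu0 (Subtype.ext ((planeDetEquiv hwz).map_eq_zero_iff.1 hcoord))

theorem IsScattered.exists_map_eq_graph [Finite F] [FiniteDimensional F K] (hU : IsScattered K U)
    (hUfin : Module.finrank F U = 4) (hK : Module.finrank F K = 4) {φ : Gal(K/F)}
    (hφ : ∀ x, φ x = x → x ∈ Set.range (algebraMap F K)) :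
    ∃ (g : (K × K) ≃ₗ[K] (K × K)) (f : K →ₗ[F] K) (θ : K), φ θ ≠ θ ∧
      (∀ x, f (θ * x) = φ θ * f x) ∧ U.map (g.restrictScalars F).toLinearMap = f.graph := by
  obtain ⟨T, θ, hθ, heigen⟩ := hU.exists_end_planeDet_apply_eq hUfin hK
  obtain ⟨w, hw0, hw⟩ := heigen .refl
  obtain ⟨z, hz0, hz⟩ := heigen φ
  have hφθ : φ θ ≠ θ := fun h => hθ (hφ θ h)
  have hφθF : φ θ ∉ Set.range (algebraMap F K) := by
    rintro ⟨c, hc⟩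
    exact hθ ⟨c, φ.injective (by rw [φ.commutes, hc])⟩
  have hwz := hU.planeDet_ne_zero_of_ne (by lia) hφθ.symm hw0 hz0 hw hz
  let coord (v : K × K) : U →ₗ[F] K := ((planeDet v).restrictScalars F).comp U.subtype
  have coord_injective : Function.Injective (coord w) := (injective_iff_map_eq_zero _).2
    fun u hu => hU.eq_zero_of_planeDet_eq_zero hφθF hwz hw hz hu
  have : FiniteDimensional F U := .of_finrank_eq_succ hUfin
  let E : U ≃ₗ[F] K := .ofInjectiveOfFinrankEq (coord w) coord_injective (hUfin.trans hK.symm)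
  let f : K →ₗ[F] K := coord z ∘ₗ E.symm.toLinearMap
  have f_coord (u : U) : f (planeDet w u) = planeDet z u :=
    congrArg (coord z) (E.symm_apply_apply u)
  refine ⟨planeDetEquiv hwz, f, θ, hφθ, fun x => ?_, ?_⟩
  · obtain ⟨u, rfl : planeDet w u = x⟩ := E.surjective x
    have hθu : θ * planeDet w u = planeDet w (T u : K × K) := (hw u).symm
    rw [hθu, f_coord, f_coord, hz]
  · ext ⟨x, y⟩
    constructor
    · rintro ⟨u, hu, huxy⟩
      obtain ⟨rfl, rfl⟩ : planeDet w u = x ∧ planeDet z u = y := Prod.ext_iff.1 huxy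
      exact (f_coord ⟨u, hu⟩).symm
    · rintro (rfl : y = f x)
      obtain ⟨u, rfl : planeDet w u = x⟩ := E.surjective x
      exact ⟨u, u.2, Prod.ext rfl (f_coord u).symm⟩

theorem exists_map_graph_eq_graph_lunardonPolverino {φ : Gal(K/F)} {f : K →ₗ[F] K} {a b : K}
    (hab : (a, b) ≠ 0) (hf : ∀ x, f x = a * φ x + b * φ.symm x) :
    ∃ (δ : K) (g : (K × K) ≃ₗ[K] (K × K)),
      f.graph.map (g.restrictScalars F).toLinearMap = (lunardonPolverino φ δ).graph := by
  obtain rfl | ha := eq_or_ne a 0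
  · have hb : b ≠ 0 := by simpa using hab
    have scaled (x : K) : b⁻¹ * f x = φ.symm x := by simp [hf, hb]
    refine ⟨0, (LinearEquiv.prodComm K K K).trans
      (.prodCongr (.smulOfNeZero K K b⁻¹ (inv_ne_zero hb)) (.refl K K)), ?_⟩
    ext ⟨x, y⟩
    constructor
    · rintro ⟨⟨v, v'⟩, (rfl : v' = f v), hv⟩
      obtain ⟨rfl, rfl⟩ : b⁻¹ * f v = x ∧ v = y := Prod.ext_iff.1 hv
      simp [scaled]
    · intro hy
      obtain rfl : y = φ x := by simpa using hy
      exact ⟨(φ x, f (φ x)), rfl, Prod.ext ((scaled _).trans (φ.symm_apply_apply x)) rfl⟩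
  · have scaled (x : K) : a⁻¹ * f x = lunardonPolverino φ (b / a) x := by
      rw [hf, lunardonPolverino_apply]
      field_simp
    refine ⟨b / a, .prodCongr (.refl K K) (.smulOfNeZero K K a⁻¹ (inv_ne_zero ha)), ?_⟩
    ext ⟨x, y⟩
    constructor
    · rintro ⟨⟨v, v'⟩, (rfl : v' = f v), hv⟩
      obtain ⟨rfl, rfl⟩ : v = x ∧ a⁻¹ * f v = y := Prod.ext_iff.1 hv
      exact scaled v
    · rintro (rfl : y = lunardonPolverino φ (b / a) x)
      exact ⟨(x, f x), rfl, Prod.ext rfl (scaled x)⟩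

end NormalForm

theorem IsScattered.exists_map_eq_graph_lunardonPolverino {F K : Type} [Field F] [Finite F]
    [Field K] [Algebra F K] [FiniteDimensional F K] [IsGalois F K] {U : Submodule F (K × K)}
    (hU : IsScattered K U) (hUfin : Module.finrank F U = 4) (hK : Module.finrank F K = 4)
    {φ : Gal(K/F)} (hφ : ∀ σ : Gal(K/F), σ ∈ Subgroup.zpowers φ) :
    ∃ (δ : K) (g : (K × K) ≃ₗ[K] (K × K)), Algebra.norm F δ ≠ 1 ∧
      U.map (g.restrictScalars F).toLinearMap = (lunardonPolverino φ δ).graph := by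
  obtain ⟨g, f, θ, hθ, hf, hgU⟩ := hU.exists_map_eq_graph hUfin hK
    fun x => mem_range_algebraMap_of_generator_apply_eq hφ
  have hscat := hU.map g
  rw [hgU] at hscat
  obtain ⟨a, b, hab⟩ := exists_eq_smul_add_smul_symm_of_semilinear hφ hK hθ hf
  have hab0 : (a, b) ≠ 0 := by
    intro h
    obtain ⟨rfl, rfl⟩ := Prod.ext_iff.1 h
    have hf0 : f = 0 := LinearMap.ext fun x => by simp [hab]
    obtain ⟨c, rfl⟩ := hscat (1, 0) (by simp [hf0]) (by simp) θ (by simp [hf0])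
    exact hθ (φ.commutes c)
  obtain ⟨δ, h, hh⟩ := exists_map_graph_eq_graph_lunardonPolverino hab0 hab
  have hδ := hscat.map h
  rw [hh] at hδ
  refine ⟨δ, g.trans h, hδ.norm_ne_one hφ (by lia), ?_⟩
  rw [← hh, ← hgU, ← Submodule.map_comp]
  rfl

/-- Corollary `cor:PG1q4`, case (i): an `F_q`-linear set of rank 4 in
`PG(1,q^4)` of maximal size `q^3+q^2+q+1` has all points of weight one and is
`PΓL(2,q^4)`-equivalent to `{⟨(x, x^q + δ x^{q^3})⟩ : x ≠ 0}` for some `δ` of norm `≠ 1`.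
Here `F = F_q`, `K = F_{q^4}`, points of `PG(1,q^4)` are the `K`-lines
`Submodule.span K {u}` of `K × K`, the weight of a point `W` in `L_U` is
`dim_F (U ⊓ W)`, and `PΓL`-equivalence is realised by a bijective `σ`-semilinear map of
`K × K` for a field automorphism `σ` of `K`.  The norm condition is
`δ^{1+q+q^2+q^3} ≠ 1`. -/
theorem stmt_7 (p e q : ℕ) (hp : p.Prime) (he : 1 ≤ e) (hq : q = p ^ e)
    (F K : Type) [Field F] [Fintype F] [Field K] [Fintype K] [Algebra F K]
    (hF : Fintype.card F = q) (hK : Fintype.card K = q ^ 4)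
    (U : Submodule F (K × K)) (hU : Module.finrank F U = 4)
    (LU : Set (Submodule K (K × K)))
    (hLU : LU = {W | ∃ u ∈ (U : Set (K × K)), u ≠ 0 ∧ W = Submodule.span K {u}})
    (hcard : Nat.card LU = q ^ 3 + q ^ 2 + q + 1) :
    (∀ W ∈ LU, Module.finrank F ↥(U ⊓ Submodule.restrictScalars F W) = 1) ∧
    ∃ δ : K, δ ^ (1 + q + q ^ 2 + q ^ 3) ≠ 1 ∧
      ∃ σ : K ≃+* K, ∃ g : (K × K) →ₛₗ[(σ : K →+* K)] (K × K), Function.Bijective g ∧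
        {W : Submodule K (K × K) | ∃ u ∈ (U : Set (K × K)), u ≠ 0 ∧
            W = Submodule.span K {g u}}
          = {W | ∃ x : K, x ≠ 0 ∧ W = Submodule.span K {(x, x ^ q + δ * x ^ q ^ 3)}} := by
  subst hF
  obtain rfl : LU = linearSet K U := hLU
  have hKfin : Module.finrank F K = 4 := finrank_eq_of_card_eq_pow hK
  have hscat : IsScattered K U := by
    refine isScattered_of_injective_extendPoint (extendPoint_injective_of_natCard_linearSet ?_)
    rw [hcard, hU, Nat.card_eq_fintype_card]
    simp only [Finset.sum_range_succ, Finset.sum_range_zero]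
    ring
  obtain ⟨δ, g, hδ, hgU⟩ := hscat.exists_map_eq_graph_lunardonPolverino hU hKfin
    mem_zpowers_frobeniusAlgEquivOfAlgebraic
  refine ⟨fun W hW => hscat.weight_eq_one hW, δ, fun hnorm => hδ ?_, .refl K, g.toLinearMap,
    g.bijective, (linearSet_map g U).symm.trans ?_⟩
  · apply (algebraMap F K).injective
    rw [FiniteField.algebraMap_norm_eq_pow_sum, map_one, ← hnorm, hKfin, Nat.card_eq_fintype_card]
    simp [Finset.sum_range_succ]
  · rw [hgU, linearSet_graph]
    simp only [lunardonPolverino_apply, frobeniusAlgEquivOfAlgebraic_symm_apply hKfin,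
      FiniteField.coe_frobeniusAlgEquivOfAlgebraic]
end
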